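/- arXiv:0804.2722 — 9 statements merged into one kernel-verified Lean document; each statement's English description precedes it below -/
import Mathlib

section
/- For every nontrivial group homomorphism θ from the norm-one subgroup μ_{q+1} = {λ ∈ K : λ^{q+1} = 1} to ℂˣ, the ℂ-vector space W_θ := {f : K × K → ℂ | f(λ⁻¹e₁, λ⁻¹e₂) = θ(λ)·f(e₁,e₂) for all λ ∈ μ_{q+1} and all (e₁,e₂) ∈ K × K} has dimension (q−1)(q²+1) over ℂ. -/
/-- The `θ`-isotypic subspace `W_θ` of functions on `K × K`, for a character `θ` of the
norm-one subgroup `μ_{q+1} = rootsOfUnity (q+1) K`: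
`f (λ⁻¹ e₁, λ⁻¹ e₂) = θ λ * f (e₁, e₂)` for all `λ ∈ μ_{q+1}`. -/
noncomputable def Wtheta (q : ℕ) (K : Type) [Field K]
    (θ : rootsOfUnity (q + 1) K →* ℂˣ) : Submodule ℂ (K × K → ℂ) where
  carrier := {f | ∀ (l : rootsOfUnity (q + 1) K) (e₁ e₂ : K),
    f ((((l : Kˣ)⁻¹ : Kˣ) : K) * e₁, (((l : Kˣ)⁻¹ : Kˣ) : K) * e₂) = (θ l : ℂ) * f (e₁, e₂)}
  add_mem' := by
    intro f g hf hg l e₁ e₂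
    simp only [Set.mem_setOf_eq] at *
    simp only [Pi.add_apply, hf l e₁ e₂, hg l e₁ e₂]
    ring
  zero_mem' := by intro l e₁ e₂; simp
  smul_mem' := by
    intro c f hf l e₁ e₂
    simp only [Set.mem_setOf_eq] at *
    simp only [Pi.smul_apply, smul_eq_mul, hf l e₁ e₂]
    ring

/-!
`W_θ` is the space of invariants of the functions on `K × K`, translated by `μ_{q+1}` and twisted
by `θ⁻¹`, so its dimension is the average over `μ_{q+1}` of the traces `θ(λ)⁻¹ · #Fix(λ)`. Every
`λ ≠ 1` fixes only the origin, and the values of `θ⁻¹` sum to zero, so only the `q⁴ - 1` nonzero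
points fixed by `λ = 1` contribute: the dimension is `(q⁴ - 1) / (q + 1)`.
-/

section TwistedFunctionRep

variable {k G X : Type*} [CommRing k] [Group G] [MulAction G X]

variable (X) in
/-- The functions on a `G`-set `X`, with `G` acting by translation and a linear character `χ`:
`(g f)(x) = χ(g) f(g⁻¹ x)`. The character is allowed to take values in `k` rather than in `kˣ`. -/
def twistedFunctionRep (χ : G →* k) : Representation k G (X → k) where
  toFun g := χ g • LinearMap.funLeft k k (g⁻¹ • · : X → X)
  map_one' := by
    ext f x
    simp [LinearMap.funLeft_apply]
  map_mul' g h := by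
    ext f x
    simp [LinearMap.funLeft_apply, mul_smul, mul_left_comm]

theorem twistedFunctionRep_apply (χ : G →* k) (g : G) (f : X → k) (x : X) :
    twistedFunctionRep X χ g f x = χ g * f (g⁻¹ • x) := rfl

theorem trace_twistedFunctionRep [Finite X] (χ : G →* k) (g : G) :
    LinearMap.trace k (X → k) (twistedFunctionRep X χ g) =
      χ g * Nat.card (MulAction.fixedBy X g) := by
  classical
  have := Fintype.ofFinite X
  have diag (x : X) : LinearMap.toMatrix (Pi.basisFun k X) (Pi.basisFun k X)
      (twistedFunctionRep X χ g) x x = if g • x = x then χ g else 0 := by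
    simp [twistedFunctionRep_apply, Pi.single_apply, inv_smul_eq_iff, eq_comm (a := x)]
  rw [LinearMap.trace_eq_matrix_trace k (Pi.basisFun k X), Matrix.trace]
  simp only [Matrix.diag_apply, diag]
  rw [← Finset.sum_filter, Finset.sum_const, nsmul_eq_mul, mul_comm, ← Fintype.card_subtype,
    ← Nat.card_eq_fintype_card]
  rfl

end TwistedFunctionRep

section Invariants

variable {k G X : Type*} [Field k] [Group G] [MulAction G X] [Finite X]

theorem card_mul_finrank_invariants_twistedFunctionRep [Fintype G]
    [NeZero (Nat.card G : k)] (χ : G →* k) :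
    (Nat.card G * Module.finrank k (twistedFunctionRep X χ).invariants : k) =
      ∑ g, χ g * Nat.card (MulAction.fixedBy X g) := by
  have hG : (Nat.card G : k) ≠ 0 := NeZero.ne _
  have := invertibleOfNonzero hG
  rw [← (twistedFunctionRep X χ).card_inv_mul_sum_char_eq_finrank, mul_inv_cancel_left₀ hG]
  exact Finset.sum_congr rfl fun g _ => trace_twistedFunctionRep χ g

theorem card_mul_finrank_invariants_add_of_card_fixedBy_eq [CharZero k] [Finite G]
    {χ : G →* k} (hχ : χ ≠ 1) {c : ℕ}
    (hc : ∀ g : G, g ≠ 1 → Nat.card (MulAction.fixedBy X g) = c) :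
    Nat.card G * Module.finrank k (twistedFunctionRep X χ).invariants + c = Nat.card X := by
  classical
  have := Fintype.ofFinite G
  have term (g : G) : χ g * (Nat.card (MulAction.fixedBy X g) : k) =
      χ g * c + if g = 1 then (Nat.card X - c : k) else 0 := by
    obtain rfl | hg := eq_or_ne g 1
    · simp [MulAction.fixedBy]
    · simp [hc g hg, hg]
  have sum_eq : ∑ g, χ g * (Nat.card (MulAction.fixedBy X g) : k) = Nat.card X - c := by
    simp only [term, Finset.sum_add_distrib, ← Finset.sum_mul, sum_hom_units_eq_zero χ hχ,
      zero_mul, Finset.sum_ite_eq', Finset.mem_univ, if_true, zero_add]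
  have : NeZero (Nat.card G : k) := ⟨Nat.cast_ne_zero.mpr Nat.card_pos.ne'⟩
  have key := (card_mul_finrank_invariants_twistedFunctionRep χ).trans sum_eq
  exact_mod_cast eq_sub_iff_add_eq.mp key

end Invariants

theorem fixedBy_subgroup_units_eq_singleton_zero {R M : Type*} [Ring R] [IsDomain R]
    [AddCommGroup M] [Module R M] [Module.IsTorsionFree R M] {H : Subgroup Rˣ} {u : H}
    (hu : u ≠ 1) : MulAction.fixedBy M u = {0} := by
  have sub_one_ne_zero : ((u : Rˣ) : R) - 1 ≠ 0 := sub_ne_zero.mpr (by simpa using hu)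
  ext m
  have smul_eq_iff : u • m = m ↔ (((u : Rˣ) : R) - 1) • m = 0 := by
    rw [sub_smul, one_smul, sub_eq_zero]
    rfl
  rw [MulAction.mem_fixedBy, smul_eq_iff, smul_eq_zero_iff_right sub_one_ne_zero,
    Set.mem_singleton_iff]

theorem card_rootsOfUnity_eq_gcd (n : ℕ) (K : Type*) [Field K] [Finite K] :
    Nat.card (rootsOfUnity n K) = (Nat.card K - 1).gcd n := by
  rw [rootsOfUnity_eq_ker, IsCyclic.card_powMonoidHom_ker, Nat.card_units]

theorem card_rootsOfUnity_succ_of_card_eq_sq {q : ℕ} {K : Type*} [Field K] [Finite K]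
    (hK : Nat.card K = q ^ 2) : Nat.card (rootsOfUnity (q + 1) K) = q + 1 := by
  have factor : q ^ 2 - 1 = (q + 1) * (q - 1) := by simpa using Nat.sq_sub_sq q 1
  rw [card_rootsOfUnity_eq_gcd, hK, factor, Nat.gcd_mul_right_left]

theorem Wtheta_eq_invariants (q : ℕ) (K : Type) [Field K] (θ : rootsOfUnity (q + 1) K →* ℂˣ) :
    Wtheta q K θ =
      (twistedFunctionRep (K × K) ((Units.coeHom ℂ).comp θ⁻¹)).invariants := by
  ext f
  simp only [Representation.mem_invariants, funext_iff, Prod.forall, twistedFunctionRep_apply,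
    MonoidHom.comp_apply, MonoidHom.inv_apply, Units.coeHom_apply, Units.val_inv_eq_inv_val,
    inv_mul_eq_iff_eq_mul₀ (Units.ne_zero _)]
  rfl

theorem card_rootsOfUnity_mul_finrank_Wtheta_add_one (q : ℕ) (K : Type) [Field K] [Finite K]
    {θ : rootsOfUnity (q + 1) K →* ℂˣ} (hθ : θ ≠ 1) :
    Nat.card (rootsOfUnity (q + 1) K) * Module.finrank ℂ (Wtheta q K θ) + 1 =
      Nat.card K ^ 2 := by
  have hχ : (Units.coeHom ℂ).comp θ⁻¹ ≠ 1 := fun h =>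
    hθ (MonoidHom.ext fun l => by simpa using DFunLike.congr_fun h l)
  rw [Wtheta_eq_invariants, sq, ← Nat.card_prod]
  refine card_mul_finrank_invariants_add_of_card_fixedBy_eq hχ fun l hl => ?_
  rw [fixedBy_subgroup_units_eq_singleton_zero hl, Nat.card_unique]

theorem dim_Wtheta_general (q : ℕ) (K : Type) [Field K] [Fintype K]
    (hK : Fintype.card K = q ^ 2) (θ : rootsOfUnity (q + 1) K →* ℂˣ) (hθ : θ ≠ 1) :
    Module.finrank ℂ (Wtheta q K θ) = (q - 1) * (q ^ 2 + 1) := by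
  rw [← Nat.card_eq_fintype_card] at hK
  have key := card_rootsOfUnity_mul_finrank_Wtheta_add_one q K hθ
  rw [card_rootsOfUnity_succ_of_card_eq_sq hK, hK] at key
  have one_le : 1 ≤ q := Nat.pos_of_ne_zero fun h => Nat.card_pos.ne' (hK.trans (by simp [h]))
  zify [one_le] at key ⊢
  refine mul_left_cancel₀ (by positivity : (q + 1 : ℤ) ≠ 0) ?_
  linear_combination key

/-- For every nontrivial character `θ` of the norm-one subgroup `μ_{q+1}` of a field `K`
with `q²` elements (`q` an odd prime power), the space `W_θ` has dimension `(q-1)(q²+1)`. -/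
theorem dim_Wtheta (q : ℕ) (hq : ∃ p n : ℕ, p.Prime ∧ Odd p ∧ 0 < n ∧ q = p ^ n)
    (K : Type) [Field K] [Fintype K] (hK : Fintype.card K = q ^ 2)
    (θ : rootsOfUnity (q + 1) K →* ℂˣ) (hθ : θ ≠ 1) :
    Module.finrank ℂ (Wtheta q K θ) = (q - 1) * (q ^ 2 + 1) :=
  dim_Wtheta_general q K hK θ hθ
end

section
/- The ℂ-vector space W₁⁺ := {f : K × K → ℂ | f(λe₁, λe₂) = f(e₁,e₂) for all λ ∈ μ_{q+1}, and f(e₁^q, e₂^q) = f(e₁,e₂) for all (e₁,e₂) ∈ K × K} has dimension q(q²+1)/2 over ℂ. -/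
/-- The subspace `W₁⁺` of functions on `K × K` invariant under the norm-one subgroup
`μ_{q+1}` and invariant under the coordinatewise Frobenius `(e₁, e₂) ↦ (e₁^q, e₂^q)`. -/
noncomputable def WonePlus (q : ℕ) (K : Type) [Field K] : Submodule ℂ (K × K → ℂ) where
  carrier := {f | (∀ l e₁ e₂ : K, l ^ (q + 1) = 1 → f (l * e₁, l * e₂) = f (e₁, e₂)) ∧
    ∀ e₁ e₂ : K, f (e₁ ^ q, e₂ ^ q) = f (e₁, e₂)}
  add_mem' := by
    rintro f g ⟨hf1, hf2⟩ ⟨hg1, hg2⟩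
    exact ⟨fun l e₁ e₂ hl => by simp [hf1 l e₁ e₂ hl, hg1 l e₁ e₂ hl],
      fun e₁ e₂ => by simp [hf2 e₁ e₂, hg2 e₁ e₂]⟩
  zero_mem' := ⟨fun l e₁ e₂ hl => by simp, fun e₁ e₂ => by simp⟩
  smul_mem' := by
    rintro c f ⟨hf1, hf2⟩
    exact ⟨fun l e₁ e₂ hl => by simp [hf1 l e₁ e₂ hl],
      fun e₁ e₂ => by simp [hf2 e₁ e₂]⟩

/-!
Let `μ = μ_{q+1}` act on `K × K` and let `σ` be the coordinatewise Frobenius. Since `σ` is an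
involution and `σ (a • x) = a⁻¹ • σ x`, the space `W₁⁺` consists of the functions that are constant
on the orbits of a semidirect product `μ ⋊ {±1}` of order `2 (q + 1)`, so its dimension is given by
Burnside's lemma. The identity fixes `q ^ 4` points, every other `a ∈ μ` fixes only the origin, and
`a σ` fixes `q ^ 2` points: by Hilbert 90 the solutions of `a * x ^ q = x` in `K` form a line over
`𝔽_q`. Hence `2 (q + 1) dim W₁⁺ = q ^ 4 + q + (q + 1) q ^ 2 = (q + 1) q (q ^ 2 + 1)`.
-/

section OrbitCounting

open MulAction

theorem finrank_eq_card_orbits (k : Type*) {G X : Type*} [Semiring k] [StrongRankCondition k]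
    [Group G] [MulAction G X] [Finite (orbitRel.Quotient G X)] {W : Submodule k (X → k)}
    (hW : ∀ f, f ∈ W ↔ ∀ (g : G) (x : X), f (g • x) = f x) :
    Module.finrank k W = Nat.card (orbitRel.Quotient G X) := by
  have hrange : W = LinearMap.range (LinearMap.funLeft k k (Quotient.mk (orbitRel G X))) := by
    ext f
    rw [hW, LinearMap.mem_range]
    constructor
    · intro hf
      refine ⟨Quotient.lift f ?_, rfl⟩
      rintro _ x ⟨g, rfl⟩
      exact hf g x
    · rintro ⟨F, rfl⟩ g x
      exact congrArg F (Quotient.sound ⟨g, rfl⟩)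
  have := Fintype.ofFinite (orbitRel.Quotient G X)
  rw [hrange, LinearMap.finrank_range_of_inj
    (LinearMap.funLeft_injective_of_surjective k k _ Quotient.mk_surjective),
    Module.finrank_fintype_fun_eq_card, Nat.card_eq_fintype_card]

/-- The homomorphism from the group `ℤˣ` of order two that sends `-1` to a given element `g`
with `g * g = 1`. -/
def intUnitsLift {H : Type*} [Monoid H] (g : H) (hg : g * g = 1) : ℤˣ →* H where
  toFun ε := if ε = 1 then 1 else g
  map_one' := if_pos rfl
  map_mul' ε δ := by
    obtain rfl | rfl := Int.units_eq_one_or ε <;> obtain rfl | rfl := Int.units_eq_one_or δ <;>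
      simp [hg]

theorem intUnitsLift_neg_one {H : Type*} [Monoid H] (g : H) (hg : g * g = 1) :
    intUnitsLift g hg (-1) = g :=
  rfl

variable {A X : Type*} [Group A] [MulAction A X] {φ : MulAut A} {τ : X → X}

/-- Let `τ` be an involution of `X` that is semilinear with respect to an involutive automorphism
`φ` of `A`. The group generated by `A` and `τ` is encoded as the action on `X` of the semidirect
product of `A` with `ℤˣ` in which `-1` acts on `A` by `φ` and on `X` by `τ`. -/
def semidirectPermHom (hφ : φ * φ = 1) (hτ : Function.Involutive τ)
    (hφτ : ∀ (a : A) (x : X), τ (a • x) = φ a • τ x) :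
    A ⋊[intUnitsLift φ hφ] ℤˣ →* Equiv.Perm X :=
  SemidirectProduct.lift (toPermHom A X)
    (intUnitsLift (hτ.toPerm τ) (Equiv.ext hτ)) fun ε => by
      ext a x
      obtain rfl | rfl := Int.units_eq_one_or ε
      · simp
      · simp [intUnitsLift_neg_one, hφτ, hτ x]

variable (hφ : φ * φ = 1) (hτ : Function.Involutive τ)
  (hφτ : ∀ (a : A) (x : X), τ (a • x) = φ a • τ x)

theorem semidirectPermHom_one (a : A) (x : X) :
    semidirectPermHom hφ hτ hφτ ⟨a, 1⟩ x = a • x := by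
  simp [semidirectPermHom, SemidirectProduct.lift]

theorem semidirectPermHom_neg_one (a : A) (x : X) :
    semidirectPermHom hφ hτ hφτ ⟨a, -1⟩ x = a • τ x := by
  simp [semidirectPermHom, SemidirectProduct.lift, intUnitsLift_neg_one]

theorem forall_semidirectPermHom_invariant_iff {β : Type*} {f : X → β} :
    (∀ g x, f (semidirectPermHom hφ hτ hφτ g x) = f x) ↔
      (∀ (a : A) (x : X), f (a • x) = f x) ∧ ∀ x, f (τ x) = f x := by
  constructor
  · intro hf
    refine ⟨fun a x => ?_, fun x => ?_⟩
    · rw [← semidirectPermHom_one hφ hτ hφτ, hf]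
    · rw [← one_smul A (τ x), ← semidirectPermHom_neg_one hφ hτ hφτ, hf]
  · rintro ⟨hA, hf⟩ ⟨a, ε⟩ x
    obtain rfl | rfl := Int.units_eq_one_or ε
    · rw [semidirectPermHom_one, hA]
    · rw [semidirectPermHom_neg_one, hA, hf]

include hφ hτ hφτ in
theorem finrank_mul_card_eq_sum_ncard_fixed [Fintype A] [Finite X] {k : Type*} [Semiring k]
    [StrongRankCondition k] {W : Submodule k (X → k)}
    (hW : ∀ f, f ∈ W ↔ (∀ (a : A) (x : X), f (a • x) = f x) ∧ ∀ x, f (τ x) = f x) :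
    Module.finrank k W * (2 * Fintype.card A) =
      ∑ a : A, {x : X | a • x = x}.ncard + ∑ a : A, {x : X | a • τ x = x}.ncard := by
  classical
  let e := SemidirectProduct.equivProd (φ := intUnitsLift φ hφ)
  let := compHom X (semidirectPermHom hφ hτ hφτ)
  have := Fintype.ofFinite X
  have := Fintype.ofEquiv _ e.symm
  have hcard : Fintype.card (A ⋊[intUnitsLift φ hφ] ℤˣ) = 2 * Fintype.card A := by
    rw [Fintype.card_congr e, Fintype.card_prod, Fintype.card_units_int, mul_comm]
  have hmem (f : X → k) :
      f ∈ W ↔ ∀ (g : A ⋊[intUnitsLift φ hφ] ℤˣ) (x : X), f (g • x) = f x :=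
    (hW f).trans (forall_semidirectPermHom_invariant_iff hφ hτ hφτ).symm
  have hfix_one (a : A) : Nat.card (fixedBy X (e.symm (a, 1))) = {x : X | a • x = x}.ncard :=
    congrArg Set.ncard (Set.ext fun x => Eq.congr_left (semidirectPermHom_one hφ hτ hφτ a x))
  have hfix_neg_one (a : A) :
      Nat.card (fixedBy X (e.symm (a, -1))) = {x : X | a • τ x = x}.ncard :=
    congrArg Set.ncard (Set.ext fun x => Eq.congr_left (semidirectPermHom_neg_one hφ hτ hφτ a x))
  rw [finrank_eq_card_orbits k hmem, ← hcard, Nat.card_eq_fintype_card,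
    ← sum_card_fixedBy_eq_card_orbits_mul_card_group, ← e.symm.sum_comp,
    Fintype.sum_prod_type_right, UnitsInt.univ, Finset.sum_pair (by decide)]
  simp only [← Nat.card_eq_fintype_card, hfix_one, hfix_neg_one]

end OrbitCounting

section CyclicGroup

variable {G : Type*} [CommGroup G] [IsCyclic G] [Finite G] {d m : ℕ}

-- For `G = Kˣ` with `|K| = q²`, `d = q - 1` and `m = q + 1`, this is Hilbert 90 for `K / 𝔽_q`.
theorem range_powMonoidHom_eq_ker_of_card_eq_mul (hG : Nat.card G = d * m) :
    (powMonoidHom d : G →* G).range = (powMonoidHom m).ker := by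
  have hd : 0 < d := Nat.pos_of_mul_pos_right (hG ▸ Nat.card_pos)
  refine Subgroup.eq_of_le_of_card_ge ?_ ?_
  · rintro _ ⟨u, rfl⟩
    rw [MonoidHom.mem_ker, powMonoidHom_apply, powMonoidHom_apply, ← pow_mul, ← hG,
      pow_card_eq_one']
  · rw [IsCyclic.card_powMonoidHom_ker, IsCyclic.card_powMonoidHom_range, hG,
      Nat.gcd_mul_left_left, Nat.gcd_mul_right_left, Nat.mul_div_cancel_left _ hd]

theorem ncard_pow_eq_of_card_eq_mul (hG : Nat.card G = d * m) {a : G} (ha : a ^ m = 1) :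
    {u : G | u ^ d = a}.ncard = d := by
  obtain ⟨b, rfl⟩ : a ∈ (powMonoidHom d : G →* G).range := by
    rwa [range_powMonoidHom_eq_ker_of_card_eq_mul hG]
  have hcoset : {u : G | u ^ d = powMonoidHom d b} = (b * ·) '' (powMonoidHom d : G →* G).ker := by
    ext u
    simp [mul_pow, eq_comm (a := b ^ d), inv_mul_eq_one]
  rw [hcoset, Set.ncard_image_of_injective _ (mul_right_injective b), ← Nat.card_coe_set_eq]
  exact (IsCyclic.card_powMonoidHom_ker G d).trans (by rw [hG, Nat.gcd_mul_right_left])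

end CyclicGroup

theorem smul_eq_self_iff_of_ne_one {R M : Type*} [Ring R] [IsCancelMulZero R] [AddCommGroup M]
    [Module R M] [Module.IsTorsionFree R M] {a : R} (ha : a ≠ 1) {x : M} : a • x = x ↔ x = 0 := by
  have hx : a • x - x = (a - 1) • x := by rw [sub_smul, one_smul]
  rw [← sub_eq_zero, hx, smul_eq_zero_iff_right (sub_ne_zero.2 ha)]

theorem prodMap_pow_smul {M : Type*} [CommMonoid M] {q : ℕ} (a : rootsOfUnity (q + 1) M)
    (x : M × M) :
    Prod.map (· ^ q) (· ^ q) (a • x) = a⁻¹ • Prod.map (· ^ q) (· ^ q) x := by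
  have ha : a ^ q = a⁻¹ := eq_inv_of_mul_eq_one_left (by rw [← pow_succ]; exact Subtype.ext a.2)
  rw [← ha]
  exact Prod.ext (smul_pow a x.1 q) (smul_pow a x.2 q)

section FiniteField

theorem ncard_mul_pow_succ_eq_self {K : Type*} [Field K] [Finite K] {d m : ℕ}
    (hK : Nat.card Kˣ = d * m) {a : Kˣ} (ha : a ^ m = 1) :
    {x : K | a * x ^ (d + 1) = x}.ncard = d + 1 := by
  have hset : {x : K | a * x ^ (d + 1) = x} =
      insert 0 (Units.val '' {u : Kˣ | u ^ d = a⁻¹}) := by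
    ext x
    obtain rfl | hx := eq_or_ne x 0
    · simp
    · lift x to Kˣ using hx.isUnit
      have hunits : a * x ^ (d + 1) = x ↔ x ^ d = a⁻¹ := by
        rw [pow_succ, ← mul_assoc, mul_eq_right, eq_inv_iff_mul_eq_one, mul_comm]
      rw [Set.mem_insert_iff, or_iff_right hx, Units.val_injective.mem_set_image]
      exact Iff.trans (by simp [Units.ext_iff]) hunits
  rw [hset, Set.ncard_insert_of_notMem (by simp),
    Set.ncard_image_of_injective _ Units.val_injective,
    ncard_pow_eq_of_card_eq_mul hK (by rw [inv_pow, ha, inv_one])]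

variable {q : ℕ} {K : Type*} [Field K] [Fintype K]

theorem natCard_units_of_card_eq_sq (hK : Fintype.card K = q ^ 2) :
    Nat.card Kˣ = (q - 1) * (q + 1) := by
  rw [Nat.card_units, Nat.card_eq_fintype_card, hK, mul_comm, ← Nat.sq_sub_sq, one_pow]

theorem natCard_rootsOfUnity_of_card_eq_sq (hK : Fintype.card K = q ^ 2) :
    Nat.card (rootsOfUnity (q + 1) K) = q + 1 := by
  rw [rootsOfUnity_eq_ker, IsCyclic.card_powMonoidHom_ker, natCard_units_of_card_eq_sq hK,
    Nat.gcd_mul_left_left]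

theorem pow_involutive_of_card_eq_sq (hK : Fintype.card K = q ^ 2) :
    Function.Involutive fun x : K => x ^ q := fun x => by
  simp only [← pow_mul, ← sq, ← hK, FiniteField.pow_card]

theorem ncard_smul_pow_eq_self (hK : Fintype.card K = q ^ 2) (a : rootsOfUnity (q + 1) K) :
    {x : K × K | a • Prod.map (· ^ q) (· ^ q) x = x}.ncard = q ^ 2 := by
  have hprod : {x : K × K | a • Prod.map (· ^ q) (· ^ q) x = x} =
      {y : K | (a : Kˣ) * y ^ q = y} ×ˢ {y : K | (a : Kˣ) * y ^ q = y} :=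
    Set.ext fun x => Prod.ext_iff
  obtain ⟨d, rfl⟩ : ∃ d, q = d + 1 :=
    Nat.exists_eq_succ_of_ne_zero (by rintro rfl; simp at hK)
  rw [hprod, Set.ncard_prod,
    ncard_mul_pow_succ_eq_self (d := d) (natCard_units_of_card_eq_sq hK) a.2, sq]

theorem sum_ncard_smul_eq_self [Fintype (rootsOfUnity (q + 1) K)] (hK : Fintype.card K = q ^ 2) :
    ∑ a : rootsOfUnity (q + 1) K, {x : K × K | a • x = x}.ncard = q ^ 4 + q := by
  classical
  have hone : {x : K × K | (1 : rootsOfUnity (q + 1) K) • x = x}.ncard = q ^ 4 := by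
    simp only [one_smul, Set.ofPred_true, Set.ncard_univ, Nat.card_eq_fintype_card,
      Fintype.card_prod, hK, ← pow_add]
  have hne (a : rootsOfUnity (q + 1) K) (ha : a ≠ 1) : {x : K × K | a • x = x}.ncard = 1 := by
    have ha' : ((a : Kˣ) : K) ≠ 1 := by simpa using ha
    exact Set.ncard_eq_one.2 ⟨0, Set.ext fun x => smul_eq_self_iff_of_ne_one ha'⟩
  rw [← Finset.add_sum_erase _ _ (Finset.mem_univ 1), hone,
    Finset.sum_congr rfl fun a ha => hne a (Finset.ne_of_mem_erase ha), Finset.sum_const,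
    Finset.card_erase_of_mem (Finset.mem_univ _), Finset.card_univ, ← Nat.card_eq_fintype_card,
    natCard_rootsOfUnity_of_card_eq_sq hK, Nat.add_sub_cancel, smul_eq_mul, mul_one]

end FiniteField

theorem mem_WonePlus_iff {q : ℕ} {K : Type} [Field K] {f : K × K → ℂ} :
    f ∈ WonePlus q K ↔ (∀ (a : rootsOfUnity (q + 1) K) (x : K × K), f (a • x) = f x) ∧
      ∀ x, f (Prod.map (· ^ q) (· ^ q) x) = f x := by
  constructor
  · rintro ⟨hμ, hσ⟩
    exact ⟨fun a x => hμ _ _ _ ((mem_rootsOfUnity' _ _).1 a.2), fun x => hσ _ _⟩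
  · rintro ⟨hμ, hσ⟩
    exact ⟨fun l x y hl => hμ (rootsOfUnity.mkOfPowEq l hl) (x, y), fun x y => hσ (x, y)⟩

theorem dim_WonePlus_general (q : ℕ) (K : Type) [Field K] [Fintype K]
    (hK : Fintype.card K = q ^ 2) :
    Module.finrank ℂ (WonePlus q K) = q * (q ^ 2 + 1) / 2 := by
  have := Fintype.ofFinite (rootsOfUnity (q + 1) K)
  have hσ := pow_involutive_of_card_eq_sq hK
  have hcount := finrank_mul_card_eq_sum_ncard_fixed (φ := MulEquiv.inv (rootsOfUnity (q + 1) K))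
    (by ext; simp) (hσ.prodMap hσ) prodMap_pow_smul (fun f => mem_WonePlus_iff (f := f))
  simp only [sum_ncard_smul_eq_self hK, ncard_smul_pow_eq_self hK, Finset.sum_const,
    Finset.card_univ, ← Nat.card_eq_fintype_card, natCard_rootsOfUnity_of_card_eq_sq hK,
    smul_eq_mul] at hcount
  refine (Nat.div_eq_of_eq_mul_left two_pos (Nat.eq_of_mul_eq_mul_right q.succ_pos ?_)).symm
  linarith

/-- For `K` a field with `q²` elements (`q` an odd prime power), the space `W₁⁺` has
dimension `q(q² + 1)/2`. -/
theorem dim_WonePlus (q : ℕ) (hq : ∃ p n : ℕ, p.Prime ∧ Odd p ∧ 0 < n ∧ q = p ^ n)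
    (K : Type) [Field K] [Fintype K] (hK : Fintype.card K = q ^ 2) :
    Module.finrank ℂ (WonePlus q K) = q * (q ^ 2 + 1) / 2 :=
  dim_WonePlus_general q K hK
end

section
/- The ℂ-vector space W₁⁻ := {f : K × K → ℂ | f(λe₁, λe₂) = f(e₁,e₂) for all λ ∈ μ_{q+1}, and f(e₁^q, e₂^q) = −f(e₁,e₂) for all (e₁,e₂) ∈ K × K} has dimension q(q−1)²/2 over ℂ. -/
/-!
Averaging over a finite group `G` and an involution `σ` that permutes the orbits of `G` projects all
functions onto those which are `G`-invariant and change sign under `σ`. The trace of a pull-back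
operator is the number of fixed points of the map, so the dimension is the average over `g` of half
the difference between the number of fixed points of `g` and that of `g ∘ σ`.

For `G = μ_{q+1}` and `σ` the Frobenius on `K × K`, the identity fixes `q⁴` points and every other
`g` only the origin. For each `g ∈ μ_{q+1}` the equation `g x ^ q = x` has `q` solutions in `K`,
because `x ↦ x ^ (q - 1)` maps the cyclic group `Kˣ` onto `μ_{q+1}` with fibres of size `q - 1`;
hence `g ∘ σ` fixes `q²` points of `K × K`.
-/

/-- The subspace `W₁⁻` of functions on `K × K` invariant under the norm-one subgroup
`μ_{q+1}` and anti-invariant under the coordinatewise Frobenius `(e₁, e₂) ↦ (e₁^q, e₂^q)`. -/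
noncomputable def WoneMinus (q : ℕ) (K : Type) [Field K] : Submodule ℂ (K × K → ℂ) where
  carrier := {f | (∀ l e₁ e₂ : K, l ^ (q + 1) = 1 → f (l * e₁, l * e₂) = f (e₁, e₂)) ∧
    ∀ e₁ e₂ : K, f (e₁ ^ q, e₂ ^ q) = - f (e₁, e₂)}
  add_mem' := by
    rintro f g ⟨hf1, hf2⟩ ⟨hg1, hg2⟩
    exact ⟨fun l e₁ e₂ hl => by simp [hf1 l e₁ e₂ hl, hg1 l e₁ e₂ hl],
      fun e₁ e₂ => by simp [hf2 e₁ e₂, hg2 e₁ e₂]; ring⟩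
  zero_mem' := ⟨fun l e₁ e₂ hl => by simp, fun e₁ e₂ => by simp⟩
  smul_mem' := by
    rintro c f ⟨hf1, hf2⟩
    exact ⟨fun l e₁ e₂ hl => by simp [hf1 l e₁ e₂ hl],
      fun e₁ e₂ => by simp [hf2 e₁ e₂]⟩

section FixedPoints

open Function

theorem trace_funLeft {R X : Type*} [CommRing R] [Finite X] (φ : X → X) :
    LinearMap.trace R (X → R) (LinearMap.funLeft R R φ) = Nat.card (fixedPoints φ) := by
  classical
  have := Fintype.ofFinite X
  rw [LinearMap.trace_eq_matrix_trace R (Pi.basisFun R X), Matrix.trace,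
    Nat.card_eq_fintype_card, Fintype.card_subtype]
  simp [Pi.single_apply, mem_fixedPoints, IsFixedPt]

theorem card_fixedPoints_prodMap {X Y : Type*} (φ : X → X) (ψ : Y → Y) :
    Nat.card (fixedPoints (Prod.map φ ψ)) =
      Nat.card (fixedPoints φ) * Nat.card (fixedPoints ψ) := by
  have h : fixedPoints (Prod.map φ ψ) = fixedPoints φ ×ˢ fixedPoints ψ := by
    ext ⟨x, y⟩
    simp [mem_fixedPoints, IsFixedPt]
  rw [h, Nat.card_congr (Equiv.Set.prod _ _), Nat.card_prod]

end FixedPoints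

theorem sum_smul_smul {G X M : Type*} [Group G] [Fintype G] [MulAction G X] [AddCommMonoid M]
    (f : X → M) (h : G) (x : X) : ∑ g : G, f (g • h • x) = ∑ g : G, f (g • x) :=
  Fintype.sum_equiv (Equiv.mulRight h) _ _ fun g => by rw [Equiv.coe_mulRight, mul_smul]

/-- The functions `f : X → k` that are invariant under `G` and change sign under the
map `σ`. -/
def antiInvariants (k G : Type*) {X : Type*} [Ring k] [SMul G X] (σ : X → X) :
    Submodule k (X → k) where
  carrier := {f | (∀ (g : G) x, f (g • x) = f x) ∧ ∀ x, f (σ x) = -f x}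
  add_mem' := fun ⟨hf, hfσ⟩ ⟨hg, hgσ⟩ =>
    ⟨fun g x => by simp [hf, hg], fun x => by simp [hfσ, hgσ, add_comm]⟩
  zero_mem' := by simp
  smul_mem' := fun c _ ⟨hf, hfσ⟩ => ⟨fun g x => by simp [hf], fun x => by simp [hfσ]⟩

namespace antiInvariants

variable (k G : Type*) {X : Type*} [Field k] [Group G] [Fintype G] [MulAction G X] (σ : X → X)

/-- The averaging operator that projects `X → k` onto `antiInvariants k G σ`. -/
noncomputable def projector : (X → k) →ₗ[k] (X → k) :=
  (2 * Nat.card G : k)⁻¹ • ∑ g : G,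
    (LinearMap.funLeft k k (g • · : X → X) - LinearMap.funLeft k k fun x => g • σ x)

variable {k G σ}

theorem projector_apply (f : X → k) (x : X) :
    projector k G σ f x =
      (2 * Nat.card G : k)⁻¹ * (∑ g : G, f (g • x) - ∑ g : G, f (g • σ x)) := by
  simp [projector, LinearMap.funLeft_apply]

theorem isProj_projector [CharZero k] (hσ : Function.Involutive σ)
    (hσG : ∀ (g : G) x, σ (g • x) ∈ MulAction.orbit G (σ x)) :
    LinearMap.IsProj (antiInvariants k G σ) (projector k G σ) where
  map_mem f := by
    refine ⟨fun g x => ?_, fun x => ?_⟩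
    · obtain ⟨h, hh⟩ := hσG g x
      rw [projector_apply, projector_apply, ← hh]
      simp only [sum_smul_smul]
    · rw [projector_apply, projector_apply, hσ]
      ring
  map_id := by
    rintro f ⟨hf, hfσ⟩
    ext x
    have hG : (Nat.card G : k) ≠ 0 := Nat.cast_ne_zero.2 Nat.card_pos.ne'
    simp only [projector_apply, hf, hfσ, Finset.sum_const, Finset.card_univ,
      ← Nat.card_eq_fintype_card, nsmul_eq_mul]
    field_simp
    ring

theorem trace_projector [Finite X] :
    LinearMap.trace k (X → k) (projector k G σ) =
      (2 * Nat.card G : k)⁻¹ * (∑ g : G, (Nat.card (MulAction.fixedBy X g) : k) -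
        ∑ g : G, (Nat.card (Function.fixedPoints fun x => g • σ x) : k)) := by
  simp only [projector, map_smul, map_sum, map_sub, trace_funLeft, Finset.sum_sub_distrib,
    smul_eq_mul]
  rfl

theorem two_mul_card_mul_finrank_add_sum_card_fixedPoints [CharZero k] [Finite X]
    (hσ : Function.Involutive σ)
    (hσG : ∀ (g : G) x, σ (g • x) ∈ MulAction.orbit G (σ x)) :
    2 * Nat.card G * Module.finrank k (antiInvariants k G σ) +
        ∑ g : G, Nat.card (Function.fixedPoints fun x => g • σ x) =
      ∑ g : G, Nat.card (MulAction.fixedBy X g) := by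
  have hG : (Nat.card G : k) ≠ 0 := Nat.cast_ne_zero.2 Nat.card_pos.ne'
  have htrace := (isProj_projector (k := k) hσ hσG).trace
  rw [trace_projector, inv_mul_eq_iff_eq_mul₀ (mul_ne_zero two_ne_zero hG),
    sub_eq_iff_eq_add] at htrace
  exact_mod_cast htrace.symm

end antiInvariants

section FixedVectors

variable {K V : Type*} [DivisionRing K] [AddCommGroup V] [Module K V]

theorem fixedBy_units_eq_singleton_zero {u : Kˣ} (hu : u ≠ 1) :
    MulAction.fixedBy V u = {0} := by
  ext v
  refine ⟨fun hv => ?_, by rintro rfl; exact smul_zero u⟩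
  by_contra hv0
  have huv : (u : K) • v = (1 : K) • v := by rw [one_smul]; exact hv
  exact hu (Units.ext (smul_left_injective K hv0 huv))

theorem sum_card_fixedBy_units_add_one (H : Subgroup Kˣ) [Fintype H] :
    ∑ u : H, Nat.card (MulAction.fixedBy V u) + 1 = Nat.card V + Nat.card H := by
  classical
  have hne : ∀ u ∈ Finset.univ.erase (1 : H), Nat.card (MulAction.fixedBy V u) = 1 := by
    intro u hu
    have hu1 : (u : Kˣ) ≠ 1 := by simpa using hu
    rw [show MulAction.fixedBy V u = {0} from fixedBy_units_eq_singleton_zero hu1,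
      Nat.card_unique]
  have hone : Nat.card (MulAction.fixedBy V (1 : H)) = Nat.card V := by
    rw [MulAction.fixedBy_one_eq_univ, Nat.card_univ]
  rw [← Finset.add_sum_erase _ _ (Finset.mem_univ (1 : H)), hone, Finset.sum_congr rfl hne,
    ← Finset.card_eq_sum_ones, add_assoc, Finset.card_erase_add_one (Finset.mem_univ _),
    Finset.card_univ, Nat.card_eq_fintype_card (α := H)]

end FixedVectors

section Powers

theorem range_powMonoidHom_eq_ker {G : Type*} [CommGroup G] [IsCyclic G] [Finite G] {m n : ℕ}
    (hG : Nat.card G = m * n) :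
    (powMonoidHom m : G →* G).range = (powMonoidHom n).ker := by
  have hm : 0 < m := Nat.pos_of_mul_pos_right (hG ▸ Nat.card_pos)
  refine Subgroup.eq_of_le_of_card_ge ?_ ?_
  · rintro _ ⟨x, rfl⟩
    simp [MonoidHom.mem_ker, ← pow_mul, ← hG]
  · rw [IsCyclic.card_powMonoidHom_range, IsCyclic.card_powMonoidHom_ker, hG,
      Nat.gcd_mul_left_left, Nat.gcd_mul_right_left, Nat.mul_div_cancel_left n hm]

theorem card_pow_eq_of_pow_eq_one {G : Type*} [CommGroup G] [IsCyclic G] [Finite G] {m n : ℕ}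
    (hG : Nat.card G = m * n) {g : G} (hg : g ^ n = 1) :
    Nat.card {x : G // x ^ m = g} = m := by
  obtain ⟨a, rfl⟩ : g ∈ (powMonoidHom m : G →* G).range := by
    rw [range_powMonoidHom_eq_ker hG]
    exact hg
  have hfiber := Nat.card_congr (MonoidHom.fiberEquivKer (powMonoidHom m : G →* G) a)
  rw [IsCyclic.card_powMonoidHom_ker, hG, Nat.gcd_mul_right_left] at hfiber
  exact hfiber

variable {K : Type*} [Field K] [Finite K] {m n : ℕ}

theorem card_rootsOfUnity_of_card_units (hK : Nat.card Kˣ = m * n) :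
    Nat.card (rootsOfUnity n K) = n := by
  rw [rootsOfUnity_eq_ker, IsCyclic.card_powMonoidHom_ker, hK, Nat.gcd_mul_left_left]

theorem card_fixedPoints_mul_pow_succ (hK : Nat.card Kˣ = m * n) {l : Kˣ} (hl : l ^ n = 1) :
    Nat.card (Function.fixedPoints fun x : K => l * x ^ (m + 1)) = m + 1 := by
  have hunits : Function.fixedPoints (fun x : K => l * x ^ (m + 1)) =
      insert 0 (Units.val '' {x : Kˣ | x ^ m = l⁻¹}) := by
    ext x
    rcases eq_or_ne x 0 with rfl | hx
    · simp [Function.mem_fixedPoints, Function.IsFixedPt]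
    · lift x to Kˣ using hx.isUnit
      simp only [Function.mem_fixedPoints, Function.IsFixedPt, Set.mem_insert_iff, x.ne_zero,
        false_or, Units.val_injective.mem_set_image, Set.mem_ofPred_eq]
      norm_cast
      rw [pow_succ, ← mul_assoc, mul_eq_right, mul_eq_one_iff_eq_inv']
  rw [hunits, Nat.card_coe_set_eq, Set.ncard_insert_of_notMem (by simp),
    Set.ncard_image_of_injective _ Units.val_injective]
  exact congrArg (· + 1) (card_pow_eq_of_pow_eq_one hK (by rw [inv_pow, hl, inv_one]))

theorem card_fixedPoints_smul_prodMap_pow_succ (hK : Nat.card Kˣ = m * n) (l : rootsOfUnity n K) :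
    Nat.card (Function.fixedPoints fun x : K × K =>
      l • Prod.map (· ^ (m + 1)) (· ^ (m + 1)) x) = (m + 1) ^ 2 := by
  calc
    _ = Nat.card (Function.fixedPoints fun x : K => (l : Kˣ) * x ^ (m + 1)) *
        Nat.card (Function.fixedPoints fun x : K => (l : Kˣ) * x ^ (m + 1)) :=
      card_fixedPoints_prodMap _ _
    _ = (m + 1) ^ 2 := by rw [card_fixedPoints_mul_pow_succ hK l.2, sq]

end Powers

theorem WoneMinus_eq_antiInvariants (q : ℕ) (K : Type) [Field K] :
    WoneMinus q K = antiInvariants ℂ (rootsOfUnity (q + 1) K) (Prod.map (· ^ q) (· ^ q)) := by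
  ext f
  refine and_congr ⟨fun hf l x => ?_, fun hf l e₁ e₂ hl => ?_⟩
    ⟨fun hf x => hf x.1 x.2, fun hf e₁ e₂ => hf (e₁, e₂)⟩
  · exact hf (l : Kˣ) x.1 x.2 ((mem_rootsOfUnity' _ _).1 l.2)
  · exact hf (rootsOfUnity.mkOfPowEq l hl) (e₁, e₂)

theorem two_mul_finrank_WoneMinus {r : ℕ} {K : Type} [Field K] [Fintype K]
    (hK : Fintype.card K = (r + 1) ^ 2) :
    2 * Module.finrank ℂ (WoneMinus (r + 1) K) = (r + 1) * r ^ 2 := by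
  have := Fintype.ofFinite (rootsOfUnity (r + 1 + 1) K)
  have hσ : Function.Involutive (· ^ (r + 1) : K → K) := fun x => by
    change (x ^ (r + 1)) ^ (r + 1) = x
    rw [← pow_mul, ← sq, ← hK, FiniteField.pow_card]
  have hunits : Nat.card Kˣ = r * (r + 1 + 1) := by
    rw [Nat.card_units, Nat.card_eq_fintype_card, hK]
    exact Nat.sub_eq_of_eq_add (by ring)
  have hμ : Nat.card (rootsOfUnity (r + 1 + 1) K) = r + 1 + 1 :=
    card_rootsOfUnity_of_card_units hunits
  have hdim := antiInvariants.two_mul_card_mul_finrank_add_sum_card_fixedPoints (k := ℂ)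
    (G := rootsOfUnity (r + 1 + 1) K) (hσ.prodMap hσ) fun l x =>
      ⟨l ^ (r + 1), by ext <;> simp [Subgroup.smul_def, Units.smul_def, mul_pow]⟩
  have hfixed := sum_card_fixedBy_units_add_one (V := K × K) (rootsOfUnity (r + 1 + 1) K)
  simp only [card_fixedPoints_smul_prodMap_pow_succ hunits, Finset.sum_const, Finset.card_univ,
    ← Nat.card_eq_fintype_card, hμ, smul_eq_mul] at hdim
  rw [← hdim, hμ, Nat.card_prod, Nat.card_eq_fintype_card (α := K), hK] at hfixed
  rw [WoneMinus_eq_antiInvariants]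
  apply Nat.eq_of_mul_eq_mul_left (r + 1).succ_pos
  linarith

theorem dim_WoneMinus_general {q : ℕ} {K : Type} [Field K] [Fintype K]
    (hK : Fintype.card K = q ^ 2) :
    Module.finrank ℂ (WoneMinus q K) = q * (q - 1) ^ 2 / 2 := by
  obtain ⟨r, rfl⟩ : ∃ r, q = r + 1 := Nat.exists_eq_succ_of_ne_zero <| by
    rintro rfl
    simp at hK
  rw [Nat.add_sub_cancel, ← two_mul_finrank_WoneMinus hK, Nat.mul_div_cancel_left _ two_pos]

/-- For `K` a field with `q²` elements (`q` an odd prime power), the space `W₁⁻`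
(the representation `θ₁₀`) has dimension `q(q - 1)²/2`. -/
theorem dim_WoneMinus (q : ℕ) (hq : ∃ p n : ℕ, p.Prime ∧ Odd p ∧ 0 < n ∧ q = p ^ n)
    (K : Type) [Field K] [Fintype K] (hK : Fintype.card K = q ^ 2) :
    Module.finrank ℂ (WoneMinus q K) = q * (q - 1) ^ 2 / 2 :=
  dim_WoneMinus_general hK
end

section
/- For e₁, e₂ ∈ K, the following are equivalent: (i) there exists λ ∈ K with λ^{q+1} = 1 such that e₁^q = λe₁ and e₂^q = λe₂; (ii) e₁ and e₂ are linearly dependent over the subfield F_q, i.e. there exist a, b ∈ F_q, not both zero, with a·e₁ + b·e₂ = 0. -/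
/-!
The `q`-power map is an involutive automorphism `σ` of `K`. If `σ` multiplies `e₁ ≠ 0` and `e₂` by
the same `l`, then `l` cancels in `e₁⁻¹ * e₂`, which is therefore fixed by `σ`. Conversely,
`e₁ * a + e₂ * b = 0` with `a ≠ 0` writes `e₁` as `e₂ * c` with `c` fixed, so every multiplier of
`e₂` is also one of `e₁`; and `e₂` has a multiplier of norm one, namely `σ e₂ * e₂⁻¹` or, when
`e₂ = 0`, simply `1`.
-/

section DivisionRing

variable {K : Type*} [DivisionRing K] (σ : K →+* K)

lemma map_inv_mul_eq_self_of_map_eq_mul {l x y : K} (hx0 : x ≠ 0) (hx : σ x = l * x)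
    (hy : σ y = l * y) : σ (x⁻¹ * y) = x⁻¹ * y := by
  have hl : l ≠ 0 := left_ne_zero_of_mul (hx ▸ (map_ne_zero σ).mpr hx0)
  rw [map_mul, map_inv₀, hx, hy, mul_inv_rev, mul_assoc, inv_mul_cancel_left₀ hl]

lemma exists_fixed_dependence_of_map_eq_mul {l x y : K} (hx : σ x = l * x) (hy : σ y = l * y) :
    ∃ a b : K, σ a = a ∧ σ b = b ∧ (a ≠ 0 ∨ b ≠ 0) ∧ x * a + y * b = 0 := by
  rcases eq_or_ne x 0 with rfl | hx0
  · exact ⟨1, 0, map_one σ, map_zero σ, .inl one_ne_zero, by simp⟩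
  · exact ⟨x⁻¹ * y, -1, map_inv_mul_eq_self_of_map_eq_mul σ hx0 hx hy, by simp,
      .inr (neg_ne_zero.mpr one_ne_zero), by simp [hx0]⟩

lemma map_eq_mul_of_fixed_dependence {a b l x y : K} (ha : σ a = a) (hb : σ b = b) (ha0 : a ≠ 0)
    (h : x * a + y * b = 0) (hy : σ y = l * y) : σ x = l * x := by
  refine mul_right_cancel₀ ha0 ?_
  have hx : x * a = -(y * b) := eq_neg_of_add_eq_zero_left h
  calc
    σ x * a = σ (x * a) := by rw [map_mul, ha]
    _ = -(l * y * b) := by rw [hx, map_neg, map_mul, hb, hy]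
    _ = l * x * a := by rw [mul_assoc l x, hx, mul_neg, mul_assoc]

lemma exists_norm_eq_one_map_eq_mul (hσ : Function.Involutive σ) (x : K) :
    ∃ l : K, σ l * l = 1 ∧ σ x = l * x := by
  rcases eq_or_ne x 0 with rfl | hx
  · exact ⟨1, by simp, by simp⟩
  · have hσx : σ x ≠ 0 := (map_ne_zero σ).mpr hx
    refine ⟨σ x * x⁻¹, ?_, (inv_mul_cancel_right₀ hx _).symm⟩
    rw [map_mul, map_inv₀, hσ x, mul_assoc, inv_mul_cancel_left₀ hσx, mul_inv_cancel₀ hx]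

-- The multiplier `l` acts on the left, so the dependence has its coefficients on the right.
theorem selfConjugate_iff_dependent_general (hσ : Function.Involutive σ) (e₁ e₂ : K) :
    (∃ l : K, σ l * l = 1 ∧ σ e₁ = l * e₁ ∧ σ e₂ = l * e₂) ↔
      ∃ a b : K, σ a = a ∧ σ b = b ∧ (a ≠ 0 ∨ b ≠ 0) ∧ e₁ * a + e₂ * b = 0 := by
  constructor
  · rintro ⟨l, -, h₁, h₂⟩
    exact exists_fixed_dependence_of_map_eq_mul σ h₁ h₂
  · rintro ⟨a, b, ha, hb, ha0 | hb0, h⟩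
    · obtain ⟨l, hl, h₂⟩ := exists_norm_eq_one_map_eq_mul σ hσ e₂
      exact ⟨l, hl, map_eq_mul_of_fixed_dependence σ ha hb ha0 h h₂, h₂⟩
    · obtain ⟨l, hl, h₁⟩ := exists_norm_eq_one_map_eq_mul σ hσ e₁
      rw [add_comm] at h
      exact ⟨l, hl, h₁, map_eq_mul_of_fixed_dependence σ hb ha hb0 h h₁⟩

end DivisionRing

section FiniteField

variable {K : Type*} [Field K] [Fintype K] {q : ℕ}

lemma exists_ringHom_eq_pow_of_dvd_card (hq : q ∣ Fintype.card K) :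
    ∃ σ : K →+* K, ∀ x, σ x = x ^ q := by
  obtain ⟨p, _⟩ := CharP.exists K
  obtain ⟨m, hp, hcard⟩ := FiniteField.card K p
  have : Fact p.Prime := ⟨hp⟩
  obtain ⟨n, -, rfl⟩ := (Nat.dvd_prime_pow hp).mp (hcard ▸ hq)
  exact ⟨iterateFrobenius K p n, iterateFrobenius_def p n⟩

lemma exists_involutive_ringHom_eq_pow (hK : Fintype.card K = q ^ 2) :
    ∃ σ : K →+* K, Function.Involutive σ ∧ ∀ x, σ x = x ^ q := by
  obtain ⟨σ, hσ⟩ := exists_ringHom_eq_pow_of_dvd_card (hK ▸ dvd_pow_self q two_ne_zero)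
  refine ⟨σ, fun x ↦ ?_, hσ⟩
  rw [hσ, hσ, ← pow_mul, ← sq, ← hK, FiniteField.pow_card]

end FiniteField

/-- For `K` a field with `q²` elements (`q` an odd prime power) and `e₁, e₂ ∈ K`, the
vector `(e₁, e₂)` is "self-conjugate", i.e. `(e₁^q, e₂^q) = λ · (e₁, e₂)` for some norm-one
`λ` (`λ^(q+1) = 1`), if and only if `e₁, e₂` are linearly dependent over the subfield
`F_q = {x ∈ K | x^q = x}`. -/
theorem selfConjugate_iff_dependent (q : ℕ)
    (hq : ∃ p n : ℕ, p.Prime ∧ Odd p ∧ 0 < n ∧ q = p ^ n)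
    (K : Type) [Field K] [Fintype K] (hK : Fintype.card K = q ^ 2) (e₁ e₂ : K) :
    (∃ l : K, l ^ (q + 1) = 1 ∧ e₁ ^ q = l * e₁ ∧ e₂ ^ q = l * e₂) ↔
      (∃ a b : K, a ^ q = a ∧ b ^ q = b ∧ (a ≠ 0 ∨ b ≠ 0) ∧ a * e₁ + b * e₂ = 0) := by
  obtain ⟨σ, hσ, hpow⟩ := exists_involutive_ringHom_eq_pow hK
  simpa only [hpow, pow_succ, mul_comm] using
    selfConjugate_iff_dependent_general σ hσ e₁ e₂
end

section
/- The action of the symplectic group Sp(4, F_q) = {g ∈ GL₄(F_q) : gᵀ J g = J} on K⁴, given by matrix-vector multiplication after mapping the entries of g into K through the inclusion F_q ⊆ K, has exactly 2q+2 orbits. -/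
open Matrix

/-- The Gram matrix of the standard symplectic form on `F⁴`: entry `1` at positions
`(1,4), (2,3)` and `-1` at positions `(3,2), (4,1)` (1-indexed), `0` elsewhere. -/
def Jmat (F : Type) [Field F] : Matrix (Fin 4) (Fin 4) F :=
  !![0, 0, 0, 1; 0, 0, 1, 0; 0, -1, 0, 0; -1, 0, 0, 0]

/-!
A basis of `K` over `F` identifies `K⁴` with pairs `(a, b)` of vectors of `V = F⁴`, equivariantly
for the symplectic group. Two pairs are conjugate exactly when they satisfy the same linear
relations and have the same symplectic value `ω a b`: the zero pair gives one orbit, the pairs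
spanning a line one orbit for each point of the projective line over `F` (the linear relation),
and the linearly independent pairs one orbit for each value of `ω a b` in `F`. Conjugacy is
realised by symplectic transvections: if `b` and `c` are independent of `a` and `ω a b = ω a c`,
then at most two transvections fixing `a` carry `b` to `c`.
-/

open LinearMap (BilinForm)
open MulAction Submodule Cardinal

/-- The group of linear automorphisms preserving a bilinear form; for an alternating
nondegenerate form this is the symplectic group. -/
def isometryGroup {R M : Type*} [CommSemiring R] [AddCommMonoid M] [Module R M]
    (B : BilinForm R M) : Subgroup (M ≃ₗ[R] M) where
  carrier := {g | ∀ x y, B (g x) (g y) = B x y}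
  one_mem' _ _ := rfl
  mul_mem' hg hh x y := (hg _ _).trans (hh x y)
  inv_mem' {g} hg x y := by
    simpa using (hg (g⁻¹ x) (g⁻¹ y)).symm

section CommonNonvanishing

variable {R M N P : Type*} [Semiring R] [AddCommMonoid M] [AddCommMonoid N] [AddCommMonoid P]
  [Module R M] [Module R N] [Module R P]

lemma exists_mem_apply_ne_zero_and_apply_ne_zero {W : Submodule R M} {f : M →ₗ[R] N}
    {g : M →ₗ[R] P} (hf : ∃ u ∈ W, f u ≠ 0) (hg : ∃ v ∈ W, g v ≠ 0) :
    ∃ w ∈ W, f w ≠ 0 ∧ g w ≠ 0 := by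
  obtain ⟨u, hu, hfu⟩ := hf
  obtain ⟨v, hv, hgv⟩ := hg
  by_cases hgu : g u = 0
  · by_cases hfv : f v = 0
    · exact ⟨u + v, W.add_mem hu hv, by simpa [hfv] using hfu, by simpa [hgu] using hgv⟩
    · exact ⟨v, hv, hfv, hgv⟩
  · exact ⟨u, hu, hfu, hgu⟩

end CommonNonvanishing

namespace isometryGroup

section CommSemiring

variable {R M : Type*} [CommSemiring R] [AddCommMonoid M] [Module R M] {B : BilinForm R M}

lemma apply_smul_smul (g : isometryGroup B) (x y : M) : B (g • x) (g • y) = B x y :=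
  g.2 x y

lemma snd_eq_smul_fst_iff_of_mem_orbit {p q : M × M} (h : p ∈ orbit (isometryGroup B) q) (t : R) :
    p.2 = t • p.1 ↔ q.2 = t • q.1 := by
  obtain ⟨g, rfl⟩ := h
  rw [Prod.smul_snd, Prod.smul_fst, smul_comm t g, (MulAction.injective g).eq_iff]

lemma fst_eq_zero_iff_of_mem_orbit {p q : M × M} (h : p ∈ orbit (isometryGroup B) q) :
    p.1 = 0 ↔ q.1 = 0 := by
  obtain ⟨g, rfl⟩ := h
  exact smul_eq_zero_iff_eq g

lemma apply_eq_apply_of_mem_orbit {p q : M × M} (h : p ∈ orbit (isometryGroup B) q) :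
    B p.1 p.2 = B q.1 q.2 := by
  obtain ⟨g, rfl⟩ := h
  exact apply_smul_smul g q.1 q.2

end CommSemiring

section CommRing

variable {R M : Type*} [CommRing R] [AddCommGroup M] [Module R M] {ω : BilinForm R M}

/-- The symplectic transvection `x ↦ x + c ω(u, x) u` as an isometry of the alternating
form `ω`. -/
def transvection (hω : ω.IsAlt) (u : M) (c : R) : isometryGroup ω :=
  ⟨LinearEquiv.transvection (f := c • ω u) (v := u) (by simp [hω u]), fun x y => by
    simp only [LinearEquiv.transvection.apply, LinearMap.smul_apply, map_add, map_smul,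
      LinearMap.add_apply, smul_eq_mul, hω u, ← hω.neg_eq u x]
    ring⟩

lemma transvection_smul (hω : ω.IsAlt) (u : M) (c : R) (x : M) :
    transvection hω u c • x = x + (c * ω u x) • u :=
  rfl

end CommRing

variable {F V : Type*} [Field F] [AddCommGroup V] [Module F V] {ω : BilinForm F V}

lemma exists_smul_eq_of_apply_ne_zero (hω : ω.IsAlt) {x y : V} (hxy : ω x y ≠ 0) :
    ∃ g : isometryGroup ω, g • x = y ∧ ∀ a, ω a x = ω a y → g • a = a := by
  have hx : ω (y - x) x ≠ 0 := by simpa [hω x, ← hω.neg_eq x y] using hxy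
  refine ⟨transvection hω (y - x) (ω (y - x) x)⁻¹, ?_, fun a ha => ?_⟩
  · rw [transvection_smul, inv_mul_cancel₀ hx, one_smul, add_sub_cancel]
  · have : ω (y - x) a = 0 := by rw [← hω.neg_eq, map_sub, ha, sub_self, neg_zero]
    rw [transvection_smul, this, mul_zero, zero_smul, add_zero]

lemma exists_apply_eq_zero_and_apply_ne_zero (hs : ω.SeparatingLeft) {a x : V}
    (hx : x ∉ span F {a}) : ∃ w, ω a w = 0 ∧ ω x w ≠ 0 := by
  contrapose! hx
  have hmem : ω x ∈ span F (Set.range fun _ : Unit => ω a) :=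
    mem_span_of_iInf_ker_le_ker (by simpa [SetLike.le_def] using hx)
  rw [Set.range_const, mem_span_singleton] at hmem
  obtain ⟨t, ht⟩ := hmem
  have hta : t • a = x := sub_eq_zero.1 (hs _ fun y => by simp [← ht])
  exact mem_span_singleton.2 ⟨t, hta⟩

/-- A case of Witt's extension theorem; `a = 0` gives transitivity on nonzero vectors. -/
lemma exists_smul_eq_and_smul_eq (hω : ω.IsAlt) (hs : ω.SeparatingLeft) {a x y : V}
    (hx : x ∉ span F {a}) (hy : y ∉ span F {a}) (hxy : ω a x = ω a y) :
    ∃ g : isometryGroup ω, g • a = a ∧ g • x = y := by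
  by_cases h : ω x y = 0
  · obtain ⟨w, haw, hxw, hyw⟩ : ∃ w ∈ LinearMap.ker (ω a), ω x w ≠ 0 ∧ ω y w ≠ 0 :=
      exists_mem_apply_ne_zero_and_apply_ne_zero
        (exists_apply_eq_zero_and_apply_ne_zero hs hx)
        (exists_apply_eq_zero_and_apply_ne_zero hs hy)
    rw [LinearMap.mem_ker] at haw
    have hxz : ω x (x + w) ≠ 0 := by simpa [hω x] using hxw
    have hzy : ω (x + w) y ≠ 0 := by simpa [h, ← hω.neg_eq y w] using hyw
    obtain ⟨g, hgx, hg⟩ := exists_smul_eq_of_apply_ne_zero hω hxz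
    obtain ⟨k, hkz, hk⟩ := exists_smul_eq_of_apply_ne_zero hω hzy
    refine ⟨k * g, ?_, by rw [mul_smul, hgx, hkz]⟩
    rw [mul_smul, hg a (by simp [haw]), hk a (by simp [haw, hxy])]
  · obtain ⟨g, hgx, hg⟩ := exists_smul_eq_of_apply_ne_zero hω h
    exact ⟨g, hg a hxy, hgx⟩

lemma exists_smul_eq (hω : ω.IsAlt) (hs : ω.SeparatingLeft) {x y : V} (hx : x ≠ 0) (hy : y ≠ 0) :
    ∃ g : isometryGroup ω, g • x = y := by
  obtain ⟨g, -, hg⟩ := exists_smul_eq_and_smul_eq hω hs (a := 0) (x := x) (y := y)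
    (by simpa using hx) (by simpa using hy) (by simp)
  exact ⟨g, hg⟩

lemma exists_notMem_span_singleton_apply_eq (hs : ω.SeparatingLeft) (hV : 2 < Module.rank F V)
    {e : V} (he : e ≠ 0) (c : F) : ∃ f, f ∉ span F {e} ∧ ω e f = c := by
  classical
  obtain ⟨h, hh⟩ : ∃ h, ω e h = 1 :=
    LinearMap.surjective (fun h0 => he (hs e fun y => by simp [h0])) 1
  obtain ⟨v, hv⟩ : ∃ v, v ∉ span F {e, h} := by
    by_contra! hspan
    have hrank := rank_span_finset_le (R := F) ({e, h} : Finset V)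
    rw [Finset.coe_pair, (eq_top_iff' (p := span F {e, h})).2 hspan, rank_top] at hrank
    exact hV.not_ge (hrank.trans (mod_cast Finset.card_le_two))
  refine ⟨v + (c - ω e v) • h, fun hf => hv ?_, by simp [hh]⟩
  have hle : span F {e} ≤ span F {e, h} := span_mono (by simp)
  exact (Submodule.add_mem_iff_left _ (smul_mem _ _ (subset_span (by simp)))).1 (hle hf)

/-- Representatives of the orbits of pairs: the zero pair, the pairs spanning the line of `e`,
indexed by the projective line `Option F` with `none` for the relation `a = 0`, and the
independent pairs with first entry `e` and second entry in the family `f`. -/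
def pairRep (e : V) (f : F → V) : Option (Option F ⊕ F) → V × V
  | none => (0, 0)
  | some (.inl none) => (0, e)
  | some (.inl (some t)) => (e, t • e)
  | some (.inr c) => (e, f c)

lemma exists_mem_orbit_pairRep (hω : ω.IsAlt) (hs : ω.SeparatingLeft) {e : V} {f : F → V}
    (he : e ≠ 0) (hf : ∀ c, f c ∉ span F {e}) (hef : ∀ c, ω e (f c) = c) (p : V × V) :
    ∃ r, pairRep e f r ∈ orbit (isometryGroup ω) p := by
  obtain ⟨a, b⟩ := p
  by_cases ha : a = 0
  · by_cases hb : b = 0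
    · exact ⟨none, 1, by simp [pairRep, ha, hb]⟩
    · obtain ⟨g, hg⟩ := exists_smul_eq hω hs hb he
      exact ⟨some (.inl none), g, by simp [pairRep, ha, hg]⟩
  · obtain ⟨g, hg⟩ := exists_smul_eq hω hs ha he
    by_cases hb : g • b ∈ span F {e}
    · obtain ⟨t, ht⟩ := mem_span_singleton.1 hb
      exact ⟨some (.inl (some t)), g, by simp [pairRep, hg, ht]⟩
    · obtain ⟨k, hke, hkb⟩ := exists_smul_eq_and_smul_eq hω hs hb (hf (ω e (g • b))) (hef _).symm
      exact ⟨some (.inr (ω e (g • b))), k * g, by simp [pairRep, mul_smul, hg, hke, hkb]⟩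

lemma eq_of_pairRep_mem_orbit {e : V} {f : F → V} (he : e ≠ 0) (hf : ∀ c, f c ∉ span F {e})
    (hef : ∀ c, ω e (f c) = c) {r s : Option (Option F ⊕ F)}
    (h : pairRep e f r ∈ orbit (isometryGroup ω) (pairRep e f s)) : r = s := by
  have hfe (t c : F) : f c ≠ t • e := fun h => hf c (mem_span_singleton.2 ⟨t, h.symm⟩)
  have hfst := fst_eq_zero_iff_of_mem_orbit h
  have hsnd := snd_eq_smul_fst_iff_of_mem_orbit h
  have happly := apply_eq_apply_of_mem_orbit h
  clear h
  rcases r with _ | (_ | t) | c <;> rcases s with _ | (_ | t') | c' <;>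
    simp_all [pairRep, (smul_left_injective F he).eq_iff]

lemma bijective_mk_pairRep (hω : ω.IsAlt) (hs : ω.SeparatingLeft) {e : V} {f : F → V}
    (he : e ≠ 0) (hf : ∀ c, f c ∉ span F {e}) (hef : ∀ c, ω e (f c) = c) :
    Function.Bijective fun r =>
      (Quotient.mk'' (pairRep e f r) : orbitRel.Quotient (isometryGroup ω) (V × V)) := by
  refine ⟨fun r s hrs => eq_of_pairRep_mem_orbit he hf hef (Quotient.exact hrs), fun O => ?_⟩
  induction O using Quotient.inductionOn' with | _ p
  obtain ⟨r, hr⟩ := exists_mem_orbit_pairRep hω hs he hf hef p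
  exact ⟨r, Quotient.sound hr⟩

theorem nonempty_option_equiv_orbitRel_quotient_prod (hω : ω.IsAlt) (hs : ω.SeparatingLeft)
    (hV : 2 < Module.rank F V) :
    Nonempty (Option (Option F ⊕ F) ≃ orbitRel.Quotient (isometryGroup ω) (V × V)) := by
  have : Nontrivial V := rank_pos_iff_nontrivial.1 (zero_lt_two.trans hV)
  obtain ⟨e, he⟩ := exists_ne (0 : V)
  choose f hf hef using exists_notMem_span_singleton_apply_eq hs hV he
  exact ⟨.ofBijective _ (bijective_mk_pairRep hω hs he hf hef)⟩

end isometryGroup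

section Matrix

variable {R n : Type*} [CommRing R] [Fintype n] [DecidableEq n] {J : Matrix n n R}

lemma mem_isometryGroup_toBilin'_iff {g : (n → R) ≃ₗ[R] (n → R)} :
    g ∈ isometryGroup J.toBilin' ↔
      (LinearMap.toMatrix' g.toLinearMap)ᵀ * J * LinearMap.toMatrix' g.toLinearMap = J := by
  rw [← (Matrix.toBilin' (R₁ := R) (n := n)).injective.eq_iff, ← Matrix.toBilin'_comp]
  simp only [Matrix.toLin'_toMatrix', LinearMap.ext_iff₂]
  rfl

lemma mem_orbit_isometryGroup_toBilin'_iff {p q : (n → R) × (n → R)} :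
    p ∈ orbit (isometryGroup J.toBilin') q ↔
      ∃ g : Matrix n n R, IsUnit g ∧ gᵀ * J * g = J ∧ p = (g *ᵥ q.1, g *ᵥ q.2) := by
  constructor
  · rintro ⟨⟨g, hg⟩, rfl⟩
    refine ⟨LinearMap.toMatrix' g.toLinearMap, ?_, mem_isometryGroup_toBilin'_iff.1 hg, ?_⟩
    · rw [LinearMap.isUnit_toMatrix'_iff]
      exact (LinearMap.GeneralLinearGroup.ofLinearEquiv g).isUnit
    · simp only [LinearMap.toMatrix'_mulVec]
      rfl
  · rintro ⟨_, ⟨g, rfl⟩, hg, rfl⟩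
    refine ⟨⟨(GeneralLinearGroup.toLin g).toLinearEquiv, ?_⟩, ?_⟩
    · rw [mem_isometryGroup_toBilin'_iff]
      convert hg <;> exact LinearMap.toMatrix'_toLin' _
    · rfl

end Matrix

section Coordinates

variable {R A n : Type*} [CommRing R] [Ring A] [Algebra R A]

/-- The pair of coordinate vectors over `R` of a vector over `A`, for a two-element basis of `A`
over `R`. -/
noncomputable def coordEquiv (b : Module.Basis (Fin 2) R A) : (n → A) ≃ (n → R) × (n → R) :=
  (Equiv.piCongrRight fun _ => b.equivFun.toEquiv.trans (finTwoArrowEquiv R)).trans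
    (Equiv.arrowProdEquivProdArrow _ _ _)

lemma coordEquiv_mulVec [Fintype n] (b : Module.Basis (Fin 2) R A) (g : Matrix n n R)
    (v : n → A) :
    coordEquiv b (g.map (algebraMap R A) *ᵥ v) =
      (g *ᵥ (coordEquiv b v).1, g *ᵥ (coordEquiv b v).2) := by
  ext i <;> simp [coordEquiv, Matrix.mulVec, dotProduct, ← Algebra.smul_def]

lemma coordEquiv_mem_orbit_iff [Fintype n] [DecidableEq n] (b : Module.Basis (Fin 2) R A)
    {J : Matrix n n R} {v w : n → A} :
    coordEquiv b w ∈ orbit (isometryGroup J.toBilin') (coordEquiv b v) ↔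
      ∃ g : Matrix n n R, IsUnit g ∧ gᵀ * J * g = J ∧ w = g.map (algebraMap R A) *ᵥ v := by
  simp_rw [mem_orbit_isometryGroup_toBilin'_iff, ← coordEquiv_mulVec, EmbeddingLike.apply_eq_iff_eq]

end Coordinates

universe u v

theorem card_orbits_Sp4_on_K4_general {F A : Type u} {n : Type v} [Field F] [Ring A]
    [Algebra F A] (hA : Module.finrank F A = 2) [Fintype n] [DecidableEq n]
    (hn : 2 < Fintype.card n) {J : Matrix n n F} (hJ : J.toBilin'.IsAlt)
    (hJ' : J.toBilin'.Nondegenerate) :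
    #{O : Set (n → A) // ∃ v : n → A,
      O = {w | ∃ g : Matrix n n F, IsUnit g ∧ gᵀ * J * g = J ∧
        w = g.map (algebraMap F A) *ᵥ v}} = 2 * lift.{v} #F + 2 := by
  have : Module.Finite F A := Module.finite_of_finrank_eq_succ hA
  let b := Module.finBasisOfFinrankEq F A hA
  let conj : Setoid (n → A) := (orbitRel (isometryGroup J.toBilin') _).comap (coordEquiv b)
  have hrank : 2 < Module.rank F (n → F) := by
    rw [rank_fun']
    exact_mod_cast hn
  obtain ⟨pairOrbits⟩ :=
    isometryGroup.nonempty_option_equiv_orbitRel_quotient_prod hJ hJ'.1 hrank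
  have orbits : orbitRel.Quotient (isometryGroup J.toBilin') ((n → F) × (n → F)) ≃ conj.classes :=
    (Quotient.congr (coordEquiv b) fun _ _ => Iff.rfl).symm.trans conj.quotientEquivClasses
  simp_rw [← coordEquiv_mem_orbit_iff b]
  calc #conj.classes
    _ = #(ULift.{v} (Option (Option F ⊕ F))) :=
      mk_congr (Equiv.ulift.trans (pairOrbits.trans orbits)).symm
    _ = 2 * lift.{v} #F + 2 := by
      simp only [mk_uLift, mk_option, mk_sum, lift_id, lift_add, lift_one]
      ring

lemma finrank_eq_of_card_eq_pow {F V : Type*} [Field F] [AddCommGroup V] [Module F V] [Fintype F]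
    [Fintype V] {m : ℕ} (h : Fintype.card V = Fintype.card F ^ m) : Module.finrank F V = m :=
  Nat.pow_right_injective Fintype.one_lt_card (Module.card_eq_pow_finrank.symm.trans h)

lemma Jmat_toBilin'_isAlt (F : Type) [Field F] : (Jmat F).toBilin'.IsAlt := fun x => by
  simp only [Matrix.toBilin'_apply, Jmat, Fin.sum_univ_four, of_apply, cons_val', cons_val_zero,
    cons_val_fin_one, mul_zero, zero_mul, cons_val_one, add_zero, cons_val, mul_one, zero_add,
    mul_neg, neg_mul]
  ring

lemma Jmat_toBilin'_nondegenerate (F : Type) [Field F] : (Jmat F).toBilin'.Nondegenerate := by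
  have hsq : Jmat F * Jmat F = -1 := by
    ext i j
    fin_cases i <;> fin_cases j <;> simp [Jmat, Matrix.mul_apply, Fin.sum_univ_four]
  have hunit : IsUnit (Jmat F) := .of_mul_eq_one (-Jmat F) (by rw [mul_neg, hsq, neg_neg])
  exact BilinForm.nondegenerate_toBilin'_iff_det_ne_zero.2
    ((Matrix.isUnit_iff_isUnit_det _).1 hunit).ne_zero

/-- Let `q` be an odd prime power, `F` a field with `q` elements and `K ⊇ F` a field with
`q²` elements.  The action of `Sp(4, F) = {g ∈ GL₄(F) | gᵀ J g = J}` on `K⁴`, by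
matrix-vector multiplication after mapping the entries of `g` into `K`, has exactly
`2q + 2` orbits. -/
theorem card_orbits_Sp4_on_K4 (q : ℕ)
    (hq : ∃ p n : ℕ, p.Prime ∧ Odd p ∧ 0 < n ∧ q = p ^ n)
    (F K : Type) [Field F] [Field K] [Algebra F K] [Fintype F] [Fintype K]
    (hF : Fintype.card F = q) (hK : Fintype.card K = q ^ 2) :
    Nat.card {O : Set (Fin 4 → K) // ∃ v : Fin 4 → K,
      O = {w | ∃ g : Matrix (Fin 4) (Fin 4) F, IsUnit g ∧
        g.transpose * Jmat F * g = Jmat F ∧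
        w = (g.map (algebraMap F K)).mulVec v}} = 2 * q + 2 := by
  subst hF
  rw [Nat.card, card_orbits_Sp4_on_K4_general (finrank_eq_of_card_eq_pow hK) (by simp)
    (Jmat_toBilin'_isAlt F) (Jmat_toBilin'_nondegenerate F), lift_id, mk_fintype]
  exact_mod_cast toNat_natCast.{0} (2 * Fintype.card F + 2)
end

section
/- Define the bilinear form ⟨x, y⟩_E := (x·y^q + x^q·y)/2 on K. Let (e₁, e₂) and (f₁, f₂) be pairs of elements of K, each pair linearly independent over F_q. Then ⟨e_i, e_j⟩_E = ⟨f_i, f_j⟩_E for all i, j ∈ {1,2} if and only if there exists λ ∈ K with λ^{q+1} = 1 such that either (f₁, f₂) = (λe₁, λe₂) or (f₁, f₂) = (λe₁^q, λe₂^q). -/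
/-!
Multiplication by a norm-one `λ` and conjugation both preserve the form. Conversely, dividing each
of two families with the same Gram matrix by its entry at an index where it does not vanish reduces
to the case where that entry is `1`. Then corresponding entries have the same trace and the same
norm, so they are roots of the same quadratic and agree up to conjugation; the remaining entries of
the Gram matrix force the same choice at every index.
-/

section InvolutiveMap

variable {K : Type*} [Field K]

/-- The symmetric form `⟨x, y⟩ = (x * σ y + σ x * y) / 2` attached to a conjugation `σ`; the form
`⟨x, y⟩_E` is the case where `σ` is the `q`-th power map. The conjugation is only assumed
multiplicative, so that power maps qualify without reference to the characteristic. -/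
def conjForm (σ : K →*₀ K) (x y : K) : K :=
  (x * σ y + σ x * y) / 2

variable {σ : K →*₀ K}

theorem conjForm_mul_mul (a x y : K) :
    conjForm σ (a * x) (a * y) = a * σ a * conjForm σ x y := by
  simp only [conjForm, map_mul]
  ring

theorem conjForm_map_map (hσ : Function.Involutive σ) (x y : K) :
    conjForm σ (σ x) (σ y) = conjForm σ x y := by
  simp only [conjForm, hσ _]
  ring

variable [NeZero (2 : K)]

theorem conjForm_self (x : K) : conjForm σ x x = x * σ x := by
  rw [conjForm, mul_comm (σ x), ← two_mul, mul_div_cancel_left₀ _ two_ne_zero]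

theorem eq_or_eq_map_of_conjForm_one_eq {x y : K} (htrace : conjForm σ 1 x = conjForm σ 1 y)
    (hnorm : conjForm σ x x = conjForm σ y y) : y = x ∨ y = σ x := by
  simp only [conjForm_self] at hnorm
  simp only [conjForm, map_one, one_mul, div_left_inj' (two_ne_zero (α := K))] at htrace
  have hroot : (y - x) * (y - σ x) = 0 := by linear_combination hnorm - y * htrace
  exact (mul_eq_zero.mp hroot).imp sub_eq_zero.mp sub_eq_zero.mp

theorem conjForm_map_right_eq_iff (hσ : Function.Involutive σ) {x y : K} :
    conjForm σ x (σ y) = conjForm σ x y ↔ σ x = x ∨ σ y = y := by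
  have hfactor : (x * y + σ x * σ y) - (x * σ y + σ x * y) = (σ x - x) * (σ y - y) := by ring
  rw [conjForm, conjForm, div_left_inj' two_ne_zero, hσ y, ← sub_eq_zero, hfactor, mul_eq_zero,
    sub_eq_zero, sub_eq_zero]

variable {ι : Type*} {e f : ι → K}

theorem forall_eq_or_forall_eq_map_of_conjForm_eq (hσ : Function.Involutive σ)
    (h : ∀ i j, conjForm σ (e i) (e j) = conjForm σ (f i) (f j)) {k : ι} (he : e k = 1)
    (hf : f k = 1) : (∀ i, f i = e i) ∨ ∀ i, f i = σ (e i) := by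
  have hconj (i : ι) : f i = e i ∨ f i = σ (e i) :=
    eq_or_eq_map_of_conjForm_one_eq (by simpa only [he, hf] using h k i) (h i i)
  refine or_iff_not_imp_left.mpr fun hne i ↦ ?_
  obtain ⟨j, hj⟩ := not_forall.mp hne
  have hfj : f j = σ (e j) := (hconj j).resolve_left hj
  refine (hconj i).elim (fun hfi ↦ ?_) id
  have hij : conjForm σ (e i) (σ (e j)) = conjForm σ (e i) (e j) := by rw [h i j, hfi, hfj]
  have hfixed : σ (e i) = e i :=
    ((conjForm_map_right_eq_iff hσ).mp hij).resolve_right (hfj ▸ hj)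
  rw [hfi, hfixed]

theorem exists_eq_mul_of_conjForm_eq (hσ : Function.Involutive σ)
    (h : ∀ i j, conjForm σ (e i) (e j) = conjForm σ (f i) (f j)) :
    ∃ l, l * σ l = 1 ∧ ((∀ i, f i = l * e i) ∨ ∀ i, f i = l * σ (e i)) := by
  have hnorm (i : ι) : e i * σ (e i) = f i * σ (f i) := by
    simpa only [conjForm_self] using h i i
  have hzero (i : ι) : e i = 0 ↔ f i = 0 := by
    simpa using congrArg (· = 0) (hnorm i)
  by_cases he : ∀ i, e i = 0
  · exact ⟨1, by simp, .inl fun i ↦ by rw [he i, (hzero i).mp (he i), mul_zero]⟩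
  obtain ⟨k, hek⟩ := not_forall.mp he
  have hfk : f k ≠ 0 := (hzero k).not.mp hek
  have hσk : σ (e k) ≠ 0 := (map_ne_zero σ).mpr hek
  have hscaled (i j : ι) : conjForm σ ((e k)⁻¹ * e i) ((e k)⁻¹ * e j) =
      conjForm σ ((f k)⁻¹ * f i) ((f k)⁻¹ * f j) := by
    simp only [conjForm_mul_mul, map_inv₀, ← mul_inv, hnorm k, h i j]
  obtain hf | hf := forall_eq_or_forall_eq_map_of_conjForm_eq hσ hscaled
    (inv_mul_cancel₀ hek) (inv_mul_cancel₀ hfk)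
  · refine ⟨f k / e k, ?_, .inl fun i ↦ ?_⟩
    · rw [map_div₀, div_mul_div_comm, ← hnorm k, div_self (mul_ne_zero hek hσk)]
    · rw [div_mul_eq_mul_div, mul_div_assoc, div_eq_inv_mul, ← hf i, mul_inv_cancel_left₀ hfk]
  · refine ⟨f k / σ (e k), ?_, .inr fun i ↦ ?_⟩
    · rw [map_div₀, hσ, div_mul_div_comm, ← hnorm k, mul_comm,
        div_self (mul_ne_zero hσk hek)]
    · have hfi : (f k)⁻¹ * f i = (σ (e k))⁻¹ * σ (e i) := by rw [hf i, map_mul, map_inv₀]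
      rw [div_mul_eq_mul_div, mul_div_assoc, div_eq_inv_mul, ← hfi, mul_inv_cancel_left₀ hfk]

theorem gram_eq_iff_O2_orbit_general (hσ : Function.Involutive σ) (e f : ι → K) :
    (∀ i j, conjForm σ (e i) (e j) = conjForm σ (f i) (f j)) ↔
      ∃ l, l * σ l = 1 ∧ ((∀ i, f i = l * e i) ∨ ∀ i, f i = l * σ (e i)) := by
  refine ⟨exists_eq_mul_of_conjForm_eq hσ, ?_⟩
  rintro ⟨l, hl, hf | hf⟩ i j
  · rw [hf, hf, conjForm_mul_mul, hl, one_mul]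
  · rw [hf, hf, conjForm_mul_mul, hl, one_mul, conjForm_map_map hσ]

end InvolutiveMap

section FiniteField

variable {K : Type*} [Field K] [Fintype K]

theorem neZero_two_of_odd_card (hK : Odd (Fintype.card K)) : NeZero (2 : K) :=
  ⟨Ring.two_ne_zero fun h ↦
    Nat.not_even_iff_odd.mpr hK (Nat.even_iff.mpr (FiniteField.even_card_of_char_two h))⟩

theorem involutive_pow_of_card_eq_sq {q : ℕ} (hK : Fintype.card K = q ^ 2) :
    Function.Involutive fun x : K ↦ x ^ q := fun x ↦ by
  change (x ^ q) ^ q = x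
  rw [← pow_mul, ← sq, ← hK, FiniteField.pow_card]

end FiniteField

/-- Let `K` be a field with `q²` elements (`q` an odd prime power), with the symmetric
bilinear form `⟨x, y⟩_E = (x y^q + x^q y)/2` corresponding to the norm.  Let `(e₁, e₂)` and
`(f₁, f₂)` be pairs of elements of `K`, each linearly independent over the subfield
`F_q = {x | x^q = x}`.  Then `⟨e_i, e_j⟩_E = ⟨f_i, f_j⟩_E` for all `i, j` if and only if
there is a norm-one `λ` (`λ^(q+1) = 1`) with `(f₁, f₂) = (λe₁, λe₂)` or
`(f₁, f₂) = (λe₁^q, λe₂^q)`. -/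
theorem gram_eq_iff_O2_orbit (q : ℕ)
    (hq : ∃ p n : ℕ, p.Prime ∧ Odd p ∧ 0 < n ∧ q = p ^ n)
    (K : Type) [Field K] [Fintype K] (hK : Fintype.card K = q ^ 2)
    (e₁ e₂ f₁ f₂ : K)
    (he : ∀ a b : K, a ^ q = a → b ^ q = b → a * e₁ + b * e₂ = 0 → a = 0 ∧ b = 0)
    (hf : ∀ a b : K, a ^ q = a → b ^ q = b → a * f₁ + b * f₂ = 0 → a = 0 ∧ b = 0) :
    ((e₁ * e₁ ^ q + e₁ ^ q * e₁) / 2 = (f₁ * f₁ ^ q + f₁ ^ q * f₁) / 2 ∧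
     (e₁ * e₂ ^ q + e₁ ^ q * e₂) / 2 = (f₁ * f₂ ^ q + f₁ ^ q * f₂) / 2 ∧
     (e₂ * e₁ ^ q + e₂ ^ q * e₁) / 2 = (f₂ * f₁ ^ q + f₂ ^ q * f₁) / 2 ∧
     (e₂ * e₂ ^ q + e₂ ^ q * e₂) / 2 = (f₂ * f₂ ^ q + f₂ ^ q * f₂) / 2) ↔
    (∃ l : K, l ^ (q + 1) = 1 ∧
      ((f₁ = l * e₁ ∧ f₂ = l * e₂) ∨ (f₁ = l * e₁ ^ q ∧ f₂ = l * e₂ ^ q))) := by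
  obtain ⟨p, n, -, hp, -, rfl⟩ := hq
  have : NeZero (2 : K) := neZero_two_of_odd_card (hK ▸ hp.pow.pow)
  simpa [Fin.forall_fin_two, conjForm, pow_succ', and_assoc] using
    gram_eq_iff_O2_orbit_general (σ := powMonoidWithZeroHom hp.pow.pos.ne')
      (involutive_pow_of_card_eq_sq hK) ![e₁, e₂] ![f₁, f₂]
end

section
/- Let γ ∈ E be a unit with γ^{q²+1} = 1, γ ≠ 1 and γ ≠ −1, and let t ∈ E be a unit with t^{q+1} = 1. Then there exists x ∈ E with x^q = x, x ≠ 0, and (tγ−1)(tγ^q−1)(tγ⁻¹−1)(t(γ^q)⁻¹−1)(t⁻¹γ−1)(t⁻¹γ^q−1)(t⁻¹γ⁻¹−1)(t⁻¹(γ^q)⁻¹−1) = x²; in other words this product is the square of a nonzero element of the subfield of E with q elements. -/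
/-!
Put `s = t + t⁻¹` and `c = γ + γ⁻¹`. The eight factors group into `((s - c) * (s - c ^ q)) ^ 2`.
The `q`-power map `σ` fixes `s`, since it inverts `t`, and `σ ∘ σ` fixes `c`, since it inverts `γ`;
hence `(s - c) * (s - c ^ q) = (s - c) * σ (s - c)` is fixed by `σ`. It is nonzero because `s = c`
forces `γ = t` or `γ = t⁻¹`, so that `σ` inverts `γ`, `σ ∘ σ` fixes `γ`, and `γ = γ⁻¹`.
-/

theorem add_inv_eq_add_inv_iff {K : Type*} [Field K] {a b : K} (ha : a ≠ 0) (hb : b ≠ 0) :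
    a + a⁻¹ = b + b⁻¹ ↔ a = b ∨ a = b⁻¹ := by
  have factor : a + a⁻¹ - (b + b⁻¹) = (a - b) * (a - b⁻¹) * a⁻¹ := by
    field_simp
    ring
  rw [← sub_eq_zero, factor, mul_eq_zero_iff_right (inv_ne_zero ha), mul_eq_zero, sub_eq_zero,
    sub_eq_zero]

theorem add_inv_sub_add_inv_sq {K : Type*} [Field K] {a b : K} (ha : a ≠ 0) (hb : b ≠ 0) :
    (a + a⁻¹ - (b + b⁻¹)) ^ 2 =
      (a * b - 1) * (a * b⁻¹ - 1) * (a⁻¹ * b - 1) * (a⁻¹ * b⁻¹ - 1) := by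
  field_simp
  ring

theorem map_ne_inv_of_map_map_eq_inv {K F : Type*} [DivisionRing K] [FunLike F K K]
    [MonoidWithZeroHomClass F K K] {σ : F} {a : K} (ha : a ≠ 0) (hσ : σ (σ a) = a⁻¹)
    (ha1 : a ≠ 1) (ha2 : a ≠ -1) : σ a ≠ a⁻¹ := by
  intro h
  have eq_inv : a = a⁻¹ := by simpa only [h, map_inv₀, inv_inv] using hσ
  rcases self_eq_inv₀.mp eq_inv with h | h | h
  exacts [ha2 h, ha h, ha1 h]

theorem add_inv_ne_add_inv_of_map_eq_inv {K F : Type*} [Field K] [FunLike F K K]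
    [MonoidWithZeroHomClass F K K] {σ : F} {a b : K} (ha0 : a ≠ 0) (ha : σ a = a⁻¹)
    (hb : σ b ≠ b⁻¹) : a + a⁻¹ ≠ b + b⁻¹ := by
  have hb0 : b ≠ 0 := by
    rintro rfl
    exact hb (by rw [map_zero, inv_zero])
  rw [Ne, add_inv_eq_add_inv_iff ha0 hb0]
  rintro (rfl | rfl)
  · exact hb ha
  · exact hb (inv_injective (by rw [← map_inv₀, ha]))

theorem det_is_square_in_Fq_general {K : Type*} [Field K] (σ : K →+* K) {γ t : K}
    (hγ : σ (σ γ) * γ = 1) (hγ1 : γ ≠ 1) (hγ2 : γ ≠ -1) (ht : σ t * t = 1) :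
    ∃ x : K, σ x = x ∧ x ≠ 0 ∧
      (t * γ - 1) * (t * σ γ - 1) * (t * γ⁻¹ - 1) * (t * (σ γ)⁻¹ - 1) *
      (t⁻¹ * γ - 1) * (t⁻¹ * σ γ - 1) * (t⁻¹ * γ⁻¹ - 1) * (t⁻¹ * (σ γ)⁻¹ - 1)
        = x ^ 2 := by
  have hγ0 : γ ≠ 0 := right_ne_zero_of_mul_eq_one hγ
  have ht0 : t ≠ 0 := right_ne_zero_of_mul_eq_one ht
  replace hγ : σ (σ γ) = γ⁻¹ := eq_inv_of_mul_eq_one_left hγ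
  replace ht : σ t = t⁻¹ := eq_inv_of_mul_eq_one_left ht
  let d := t + t⁻¹ - (γ + γ⁻¹)
  have map_d : σ d = t + t⁻¹ - (σ γ + (σ γ)⁻¹) := by simp [d, ht, add_comm]
  have map_map_d : σ (σ d) = d := by simp [d, ht, hγ, add_comm]
  have d_ne_zero : d ≠ 0 :=
    sub_ne_zero.mpr <| add_inv_ne_add_inv_of_map_eq_inv ht0 ht
      (map_ne_inv_of_map_map_eq_inv hγ0 hγ hγ1 hγ2)
  refine ⟨d * σ d, ?_, ?_, ?_⟩
  · rw [map_mul, map_map_d, mul_comm]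
  · exact mul_ne_zero d_ne_zero ((map_ne_zero σ).mpr d_ne_zero)
  · rw [mul_pow, map_d, add_inv_sub_add_inv_sq ht0 hγ0,
      add_inv_sub_add_inv_sq ht0 ((map_ne_zero σ).mpr hγ0)]
    ring

/-- Let `E` be a field with `q⁴` elements (`q` an odd prime power), let `γ ∈ E` with
`γ^(q²+1) = 1`, `γ ≠ ±1`, and let `t ∈ E` with `t^(q+1) = 1`.  Then the product
`∏ (t^{±1} γ^{±1} - 1)(t^{±1} γ^{±q} - 1)` (eight factors) is the square of a nonzero
element of the subfield `F_q = {x ∈ E | x^q = x}`. -/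
theorem det_is_square_in_Fq (q : ℕ)
    (hq : ∃ p n : ℕ, p.Prime ∧ Odd p ∧ 0 < n ∧ q = p ^ n)
    (E : Type) [Field E] [Fintype E] (hE : Fintype.card E = q ^ 4)
    (γ : E) (hγ0 : γ ≠ 0) (hγ : γ ^ (q ^ 2 + 1) = 1) (hγ1 : γ ≠ 1) (hγ2 : γ ≠ -1)
    (t : E) (ht0 : t ≠ 0) (ht : t ^ (q + 1) = 1) :
    ∃ x : E, x ^ q = x ∧ x ≠ 0 ∧
      (t * γ - 1) * (t * γ ^ q - 1) * (t * γ⁻¹ - 1) * (t * (γ ^ q)⁻¹ - 1) *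
      (t⁻¹ * γ - 1) * (t⁻¹ * γ ^ q - 1) * (t⁻¹ * γ⁻¹ - 1) * (t⁻¹ * (γ ^ q)⁻¹ - 1)
        = x ^ 2 := by
  obtain ⟨p, n, hp, -, -, rfl⟩ := hq
  have : Fact p.Prime := ⟨hp⟩
  have : CharP E p := charP_of_card_eq_prime_pow (f := n * 4) (by rw [hE, pow_mul])
  simpa only [iterateFrobenius_def] using
    det_is_square_in_Fq_general (iterateFrobenius E p n)
      (by rwa [iterateFrobenius_def, iterateFrobenius_def, ← pow_mul, ← sq, ← pow_succ])
      hγ1 hγ2 (by rwa [iterateFrobenius_def, ← pow_succ])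
end

section
/- Let γ ∈ E be a unit with γ^{q²+1} = 1, γ ≠ 1 and γ ≠ −1. Set y := (γ − γ⁻¹)(γ^q − γ^{−q}) ∈ E. Then (1−γ²)(1−γ^{2q})(1−γ^{−2})(1−γ^{−2q}) = y², y ≠ 0, y^q = −y, and consequently for every x ∈ E with x^q = x one has (1−γ²)(1−γ^{2q})(1−γ^{−2})(1−γ^{−2q}) ≠ x²; in other words this product is not the square of any element of the subfield of E with q elements. -/
/-!
The `q`-power map is a ring endomorphism `σ` of `E`, and `γ ^ (q ^ 2 + 1) = 1` says
`σ (σ γ) = γ⁻¹`.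
Since `(1 - a ^ 2) * (1 - a⁻¹ ^ 2) = -(a - a⁻¹) ^ 2`, the signs coming from `a = γ` and `a = σ γ`
cancel and the product is `y ^ 2`. Applying `σ` replaces `(γ, σ γ)` by `(σ γ, γ⁻¹)`, hence `y`
by `-y`; so neither of the two square roots `y` and `-y` of the product is fixed by `σ`.
-/

theorem sub_inv_ne_zero {K : Type*} [DivisionRing K] {a : K} (h0 : a ≠ 0) (h1 : a ≠ 1)
    (h2 : a ≠ -1) : a - a⁻¹ ≠ 0 := by
  rw [sub_ne_zero, Ne, self_eq_inv₀]
  tauto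

theorem pow_pow_eq_inv_of_pow_sq_add_one_eq_one {M : Type*} [DivisionMonoid M] {a : M} {q : ℕ}
    (h : a ^ (q ^ 2 + 1) = 1) : (a ^ q) ^ q = a⁻¹ := by
  rw [← pow_mul, ← sq]
  exact eq_inv_of_mul_eq_one_left (by rw [← pow_succ, h])

theorem sq_ne_sq_of_map_eq_neg {R : Type*} [CommRing R] [IsDomain R] (hR : ringChar R ≠ 2)
    (f : R →+ R) {x y : R} (hy : y ≠ 0) (hfy : f y = -y) (hfx : f x = x) : y ^ 2 ≠ x ^ 2 := by
  intro hsq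
  have hfix : f y = y := by
    rcases sq_eq_sq_iff_eq_or_eq_neg.mp hsq with rfl | rfl
    · exact hfx
    · rw [map_neg, hfx]
  exact hy ((Ring.eq_self_iff_eq_zero_of_char_ne_two hR).mp (hfy.symm.trans hfix))

theorem ringChar_ne_two_of_odd_card {F : Type*} [Field F] [Fintype F]
    (h : Odd (Fintype.card F)) : ringChar F ≠ 2 := fun hchar ↦
  Nat.not_even_iff_odd.mpr h (Nat.even_iff.mpr (FiniteField.even_card_of_char_two hchar))

theorem exists_ringHom_forall_eq_pow {R : Type*} [CommRing R] [IsDomain R] [Fintype R]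
    {p n k : ℕ} (hp : p.Prime) (hR : Fintype.card R = (p ^ n) ^ k) :
    ∃ f : R →+* R, ∀ x, f x = x ^ p ^ n := by
  have : Fact p.Prime := ⟨hp⟩
  have : CharP R p := charP_of_card_eq_prime_pow (hR.trans (pow_mul p n k).symm)
  exact ⟨iterateFrobenius R p n, iterateFrobenius_def p n⟩

section Field

variable {E : Type*} [Field E]

theorem one_sub_sq_mul_one_sub_inv_sq {a : E} (ha : a ≠ 0) :
    (1 - a ^ 2) * (1 - (a ^ 2)⁻¹) = -(a - a⁻¹) ^ 2 := by
  field_simp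
  ring

theorem prod_one_sub_sq_eq_sq {a b : E} (ha : a ≠ 0) (hb : b ≠ 0) :
    (1 - a ^ 2) * (1 - b ^ 2) * (1 - (a ^ 2)⁻¹) * (1 - (b ^ 2)⁻¹)
      = ((a - a⁻¹) * (b - b⁻¹)) ^ 2 := by
  calc
    _ = ((1 - a ^ 2) * (1 - (a ^ 2)⁻¹)) * ((1 - b ^ 2) * (1 - (b ^ 2)⁻¹)) := by ring
    _ = -(a - a⁻¹) ^ 2 * -(b - b⁻¹) ^ 2 := by
      rw [one_sub_sq_mul_one_sub_inv_sq ha, one_sub_sq_mul_one_sub_inv_sq hb]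
    _ = ((a - a⁻¹) * (b - b⁻¹)) ^ 2 := by ring

theorem map_sub_inv_mul_map_sub_inv_eq_neg (σ : E →+* E) {a : E} (h : σ (σ a) = a⁻¹) :
    σ ((a - a⁻¹) * (σ a - (σ a)⁻¹)) = -((a - a⁻¹) * (σ a - (σ a)⁻¹)) := by
  calc
    _ = (σ a - (σ a)⁻¹) * (a⁻¹ - a) := by simp only [map_mul, map_sub, map_inv₀, h, inv_inv]
    _ = -((a - a⁻¹) * (σ a - (σ a)⁻¹)) := by ring

theorem sub_inv_mul_map_sub_inv_ne_zero (σ : E →+* E) {a : E} (h0 : a ≠ 0) (h1 : a ≠ 1)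
    (h2 : a ≠ -1) : (a - a⁻¹) * (σ a - (σ a)⁻¹) ≠ 0 := by
  have ha : a - a⁻¹ ≠ 0 := sub_inv_ne_zero h0 h1 h2
  rw [← map_inv₀, ← map_sub]
  exact mul_ne_zero ha ((map_ne_zero σ).mpr ha)

theorem det_is_nonsquare_in_Fq_general (hE : ringChar E ≠ 2) (σ : E →+* E) {γ : E}
    (hγ0 : γ ≠ 0) (hγ : σ (σ γ) = γ⁻¹) (hγ1 : γ ≠ 1) (hγ2 : γ ≠ -1) :
    (1 - γ ^ 2) * (1 - σ γ ^ 2) * (1 - (γ ^ 2)⁻¹) * (1 - (σ γ ^ 2)⁻¹)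
        = ((γ - γ⁻¹) * (σ γ - (σ γ)⁻¹)) ^ 2 ∧
    (γ - γ⁻¹) * (σ γ - (σ γ)⁻¹) ≠ 0 ∧
    σ ((γ - γ⁻¹) * (σ γ - (σ γ)⁻¹)) = -((γ - γ⁻¹) * (σ γ - (σ γ)⁻¹)) ∧
    ∀ x : E, σ x = x →
      (1 - γ ^ 2) * (1 - σ γ ^ 2) * (1 - (γ ^ 2)⁻¹) * (1 - (σ γ ^ 2)⁻¹) ≠ x ^ 2 := by
  have hsq := prod_one_sub_sq_eq_sq hγ0 ((map_ne_zero σ).mpr hγ0)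
  have hne := sub_inv_mul_map_sub_inv_ne_zero σ hγ0 hγ1 hγ2
  have hneg := map_sub_inv_mul_map_sub_inv_eq_neg σ hγ
  refine ⟨hsq, hne, hneg, fun x hx ↦ ?_⟩
  rw [hsq]
  exact sq_ne_sq_of_map_eq_neg hE σ.toAddMonoidHom hne hneg hx

end Field

/-- Let `E` be a field with `q⁴` elements (`q` an odd prime power) and let `γ ∈ E` with
`γ^(q²+1) = 1`, `γ ≠ ±1`.  Set `y = (γ - γ⁻¹)(γ^q - γ^{-q})`.  Then
`(1-γ²)(1-γ^{2q})(1-γ^{-2})(1-γ^{-2q}) = y²`, `y ≠ 0`, `y^q = -y`, and consequently this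
product is not the square of any element `x` of the subfield `F_q = {x ∈ E | x^q = x}`. -/
theorem det_is_nonsquare_in_Fq (q : ℕ)
    (hq : ∃ p n : ℕ, p.Prime ∧ Odd p ∧ 0 < n ∧ q = p ^ n)
    (E : Type) [Field E] [Fintype E] (hE : Fintype.card E = q ^ 4)
    (γ : E) (hγ0 : γ ≠ 0) (hγ : γ ^ (q ^ 2 + 1) = 1) (hγ1 : γ ≠ 1) (hγ2 : γ ≠ -1) :
    (1 - γ ^ 2) * (1 - γ ^ (2 * q)) * (1 - (γ ^ 2)⁻¹) * (1 - (γ ^ (2 * q))⁻¹)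
        = ((γ - γ⁻¹) * (γ ^ q - (γ ^ q)⁻¹)) ^ 2 ∧
    (γ - γ⁻¹) * (γ ^ q - (γ ^ q)⁻¹) ≠ 0 ∧
    ((γ - γ⁻¹) * (γ ^ q - (γ ^ q)⁻¹)) ^ q = -((γ - γ⁻¹) * (γ ^ q - (γ ^ q)⁻¹)) ∧
    ∀ x : E, x ^ q = x →
      (1 - γ ^ 2) * (1 - γ ^ (2 * q)) * (1 - (γ ^ 2)⁻¹) * (1 - (γ ^ (2 * q))⁻¹) ≠ x ^ 2 := by
  obtain ⟨p, n, hp, hodd, -, rfl⟩ := hq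
  obtain ⟨σ, hσ⟩ := exists_ringHom_forall_eq_pow hp hE
  have hchar : ringChar E ≠ 2 := ringChar_ne_two_of_odd_card (by rw [hE]; exact hodd.pow.pow)
  have hσγ : σ (σ γ) = γ⁻¹ := by
    simpa only [hσ] using pow_pow_eq_inv_of_pow_sq_add_one_eq_one hγ
  simpa only [hσ, pow_mul'] using det_is_nonsquare_in_Fq_general hchar σ hγ0 hσγ hγ1 hγ2
end

section
/- Let U₀ be the set of 4×4 matrices over F_q of the form with rows (1, −α, β, μ), (0, 1, λ, λα+β), (0, 0, 1, α), (0, 0, 0, 1), where α, β, λ, μ range over F_q. Then U₀ is a subgroup of GL₄(F_q) of order q⁴; its commutator subgroup equals U₀' := {matrices of this form with α = λ = 0}; and its center equals U₀'' := {matrices of this form with α = β = λ = 0}. -/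
open Matrix

/-- The unipotent upper-triangular matrices of `Sp(4, F)`:
rows `(1, -α, β, μ)`, `(0, 1, λ, λα+β)`, `(0, 0, 1, α)`, `(0, 0, 0, 1)`. -/
def U0mat (F : Type) [Field F] (α β l μ : F) : Matrix (Fin 4) (Fin 4) F :=
  !![1, -α, β, μ; 0, 1, l, l * α + β; 0, 0, 1, α; 0, 0, 0, 1]

/-!
Multiplying out, the commutator of the elements of `U₀` with parameters `(α, β, λ, μ)` and
`(α', β', λ', μ')` has parameters `(0, α'λ - αλ', 0, 2(βα' - αβ') + α²λ' - α'²λ)`, so it lies in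
`U₀'`. If `2` is invertible, the commutators of `(1, 0, 0, 0)` with the elements `(0, t, -β, 0)`
already fill `U₀'`, and an element commuting with `(1, 0, 0, 0)` and `(0, 0, 1, 0)` has
`α = β = λ = 0`.
-/

/-- The upper unitriangular matrices of `Sp(4, R)` over a commutative ring `R`, in the coordinates
of `U0mat`, which is the case where `R` is a field. -/
def symplecticUnipotent {R : Type*} [CommRing R] (α β l μ : R) : Matrix (Fin 4) (Fin 4) R :=
  !![1, -α, β, μ; 0, 1, l, l * α + β; 0, 0, 1, α; 0, 0, 0, 1]

namespace symplecticUnipotent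

open scoped commutatorElement

variable {R : Type*} [CommRing R]

theorem mul_eq (α β l μ α' β' l' μ' : R) :
    symplecticUnipotent α β l μ * symplecticUnipotent α' β' l' μ' =
      symplecticUnipotent (α + α') (β + β' - α * l') (l + l')
        (μ + μ' + β * α' - α * (l' * α' + β')) := by
  ext i j
  fin_cases i <;> fin_cases j <;>
    simp only [symplecticUnipotent, mul_apply, Fin.sum_univ_four, of_apply, cons_val,
      Fin.zero_eta, Fin.mk_one, Fin.reduceFinMk] <;>
    ring

theorem zero_eq_one : symplecticUnipotent (0 : R) 0 0 0 = 1 := by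
  ext i j
  fin_cases i <;> fin_cases j <;> simp [symplecticUnipotent]

theorem eq_iff {α β l μ α' β' l' μ' : R} :
    symplecticUnipotent α β l μ = symplecticUnipotent α' β' l' μ' ↔
      α = α' ∧ β = β' ∧ l = l' ∧ μ = μ' := by
  refine ⟨fun h => ?_, by rintro ⟨rfl, rfl, rfl, rfl⟩; rfl⟩
  have entry (i j : Fin 4) := congrFun₂ h i j
  exact ⟨entry 2 3, entry 0 2, entry 1 2, entry 0 3⟩

/-- `symplecticUnipotent α β l μ` as an element of `GL₄(R)`. -/
def toGL (α β l μ : R) : GL (Fin 4) R where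
  val := symplecticUnipotent α β l μ
  inv := symplecticUnipotent (-α) (-β - α * l) (-l) (-μ)
  val_inv := by rw [mul_eq, ← zero_eq_one]; congr 1 <;> ring
  inv_val := by rw [mul_eq, ← zero_eq_one]; congr 1 <;> ring

theorem coe_eq_iff_eq_toGL {g : GL (Fin 4) R} {α β l μ : R} :
    (g : Matrix (Fin 4) (Fin 4) R) = symplecticUnipotent α β l μ ↔ g = toGL α β l μ :=
  Units.ext_iff (v := toGL α β l μ).symm

theorem toGL_inj {α β l μ α' β' l' μ' : R} :
    toGL α β l μ = toGL α' β' l' μ' ↔ α = α' ∧ β = β' ∧ l = l' ∧ μ = μ' :=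
  Units.ext_iff.trans eq_iff

theorem toGL_zero : toGL (0 : R) 0 0 0 = 1 :=
  Units.ext zero_eq_one

theorem toGL_mul (α β l μ α' β' l' μ' : R) :
    toGL α β l μ * toGL α' β' l' μ' =
      toGL (α + α') (β + β' - α * l') (l + l') (μ + μ' + β * α' - α * (l' * α' + β')) :=
  Units.ext (mul_eq ..)

theorem toGL_inv (α β l μ : R) : (toGL α β l μ)⁻¹ = toGL (-α) (-β - α * l) (-l) (-μ) :=
  Units.ext rfl

theorem commutatorElement_toGL (α β l μ α' β' l' μ' : R) :
    ⁅toGL α β l μ, toGL α' β' l' μ'⁆ =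
      toGL 0 (α' * l - α * l') 0 (2 * (β * α' - α * β') + α ^ 2 * l' - α' ^ 2 * l) := by
  rw [commutatorElement_def, mul_inv_eq_iff_eq_mul, mul_inv_eq_iff_eq_mul]
  simp only [toGL_mul]
  congr 1 <;> ring

theorem toGL_mul_comm_iff {α β l μ α' β' l' μ' : R} :
    toGL α β l μ * toGL α' β' l' μ' = toGL α' β' l' μ' * toGL α β l μ ↔
      α' * l - α * l' = 0 ∧ 2 * (β * α' - α * β') + α ^ 2 * l' - α' ^ 2 * l = 0 := by
  rw [← commutatorElement_eq_one_iff_mul_comm, commutatorElement_toGL, ← toGL_zero, toGL_inj]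
  simp only [true_and]

variable (R) in
/-- The group `U₀` of all matrices `symplecticUnipotent α β l μ`. -/
def subgroup : Subgroup (GL (Fin 4) R) where
  carrier := {g | ∃ α β l μ : R, g = toGL α β l μ}
  one_mem' := ⟨0, 0, 0, 0, toGL_zero.symm⟩
  mul_mem' := by
    rintro _ _ ⟨α, β, l, μ, rfl⟩ ⟨α', β', l', μ', rfl⟩
    exact ⟨_, _, _, _, toGL_mul ..⟩
  inv_mem' := by
    rintro _ ⟨α, β, l, μ, rfl⟩
    exact ⟨_, _, _, _, toGL_inv ..⟩

theorem mem_subgroup {g : GL (Fin 4) R} :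
    g ∈ subgroup R ↔ ∃ α β l μ : R, g = toGL α β l μ :=
  Iff.rfl

theorem toGL_mem_subgroup (α β l μ : R) : toGL α β l μ ∈ subgroup R :=
  ⟨α, β, l, μ, rfl⟩

variable (R) in
/-- The group `U₀'` of all matrices `symplecticUnipotent 0 β 0 μ`, which is the derived subgroup of
`U₀` when `2` is invertible. -/
def derivedSubgroup : Subgroup (GL (Fin 4) R) where
  carrier := {g | ∃ β μ : R, g = toGL 0 β 0 μ}
  one_mem' := ⟨0, 0, toGL_zero.symm⟩
  mul_mem' := by
    rintro _ _ ⟨β, μ, rfl⟩ ⟨β', μ', rfl⟩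
    exact ⟨β + β', μ + μ', by simp [toGL_mul]⟩
  inv_mem' := by
    rintro _ ⟨β, μ, rfl⟩
    exact ⟨-β, -μ, by simp [toGL_inv]⟩

theorem mem_derivedSubgroup {g : GL (Fin 4) R} :
    g ∈ derivedSubgroup R ↔ ∃ β μ : R, g = toGL 0 β 0 μ :=
  Iff.rfl

variable (R) in
theorem cardinalMk_subgroup : Cardinal.mk (subgroup R) = Cardinal.mk R ^ 4 := by
  let param (x : R × R × R × R) : subgroup R := ⟨_, toGL_mem_subgroup x.1 x.2.1 x.2.2.1 x.2.2.2⟩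
  have param_bijective : Function.Bijective param := by
    constructor
    · intro x y hxy
      simpa only [Prod.ext_iff] using toGL_inj.1 (congrArg Subtype.val hxy)
    · rintro ⟨_, α, β, l, μ, rfl⟩
      exact ⟨(α, β, l, μ), rfl⟩
  rw [← Cardinal.mk_congr (Equiv.ofBijective param param_bijective)]
  simp only [Cardinal.mk_prod, Cardinal.lift_id]
  ring

variable (R) in
theorem commutator_subgroup_le : ⁅subgroup R, subgroup R⁆ ≤ derivedSubgroup R := by
  rw [Subgroup.commutator_le]
  rintro _ ⟨α, β, l, μ, rfl⟩ _ ⟨α', β', l', μ', rfl⟩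
  exact ⟨_, _, commutatorElement_toGL ..⟩

theorem exists_toGL_eq_commutatorElement (h2 : IsUnit (2 : R)) (β μ : R) :
    ∃ t : R, toGL 0 β 0 μ = ⁅toGL (1 : R) 0 0 0, toGL 0 t (-β) 0⁆ := by
  obtain ⟨t, ht⟩ : 2 ∣ -(μ + β) := h2.dvd
  refine ⟨t, ?_⟩
  rw [commutatorElement_toGL, toGL_inj]
  exact ⟨rfl, by ring, rfl, by linear_combination -ht⟩

theorem commutator_subgroup (h2 : IsUnit (2 : R)) :
    ⁅subgroup R, subgroup R⁆ = derivedSubgroup R := by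
  refine (commutator_subgroup_le R).antisymm ?_
  rintro _ ⟨β, μ, rfl⟩
  obtain ⟨t, ht⟩ := exists_toGL_eq_commutatorElement h2 β μ
  rw [ht]
  exact Subgroup.commutator_mem_commutator (toGL_mem_subgroup ..) (toGL_mem_subgroup ..)

theorem mem_subgroup_and_forall_mul_comm_iff (h2 : (2 : R) ∈ nonZeroDivisors R)
    {g : GL (Fin 4) R} :
    (g ∈ subgroup R ∧ ∀ h ∈ subgroup R, g * h = h * g) ↔ ∃ μ : R, g = toGL 0 0 0 μ := by
  constructor
  · rintro ⟨⟨α, β, l, μ, rfl⟩, hcomm⟩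
    obtain ⟨hl, hβ⟩ := toGL_mul_comm_iff.1 (hcomm _ (toGL_mem_subgroup 1 0 0 0))
    obtain ⟨hα, -⟩ := toGL_mul_comm_iff.1 (hcomm _ (toGL_mem_subgroup 0 0 1 0))
    obtain rfl : l = 0 := by linear_combination hl
    obtain rfl : α = 0 := by linear_combination -hα
    obtain rfl : β = 0 := h2.1 β (by linear_combination hβ)
    exact ⟨μ, rfl⟩
  · rintro ⟨μ, rfl⟩
    refine ⟨toGL_mem_subgroup .., ?_⟩
    rintro _ ⟨α', β', l', μ', rfl⟩
    exact toGL_mul_comm_iff.2 ⟨by ring, by ring⟩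

end symplecticUnipotent

theorem isUnit_two_of_odd_of_natCast_eq_zero {R : Type*} [CommRing R] {n : ℕ} (hn : Odd n)
    (h : (n : R) = 0) : IsUnit (2 : R) := by
  have hcoprime : IsCoprime ((2 : ℕ) : R) (n : R) := (Nat.coprime_two_left.2 hn).cast
  rwa [h, isCoprime_zero_right, Nat.cast_two] at hcoprime

open symplecticUnipotent in
theorem U0_subgroup_commutator_center_general {R : Type*} [CommRing R] (h2 : IsUnit (2 : R)) :
    ∃ H : Subgroup (GL (Fin 4) R),
      (∀ g : GL (Fin 4) R, g ∈ H ↔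
        ∃ α β l μ : R, (g : Matrix (Fin 4) (Fin 4) R) = symplecticUnipotent α β l μ) ∧
      Cardinal.mk H = Cardinal.mk R ^ 4 ∧
      (∀ g : GL (Fin 4) R, g ∈ ⁅H, H⁆ ↔
        ∃ β μ : R, (g : Matrix (Fin 4) (Fin 4) R) = symplecticUnipotent 0 β 0 μ) ∧
      (∀ g : GL (Fin 4) R,
        (g ∈ H ∧ ∀ h ∈ H, g * h = h * g) ↔
        ∃ μ : R, (g : Matrix (Fin 4) (Fin 4) R) = symplecticUnipotent 0 0 0 μ) := by
  simp only [coe_eq_iff_eq_toGL]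
  exact ⟨subgroup R, fun _ => mem_subgroup, cardinalMk_subgroup R,
    fun _ => by rw [commutator_subgroup h2, mem_derivedSubgroup],
    fun _ => mem_subgroup_and_forall_mul_comm_iff h2.mem_nonZeroDivisors⟩

/-- Let `F` be a field with `q` elements, `q` an odd prime power.  The set `U₀` of matrices
`U0mat α β λ μ` is a subgroup of `GL₄(F)` of order `q⁴`; its commutator subgroup is
`U₀' = {U0mat 0 β 0 μ}`; and its center is `U₀'' = {U0mat 0 0 0 μ}`. -/
theorem U0_subgroup_commutator_center (q : ℕ)
    (hq : ∃ p n : ℕ, p.Prime ∧ Odd p ∧ 0 < n ∧ q = p ^ n)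
    (F : Type) [Field F] [Fintype F] (hF : Fintype.card F = q) :
    ∃ H : Subgroup (GL (Fin 4) F),
      (∀ g : GL (Fin 4) F, g ∈ H ↔ ∃ α β l μ : F, (g : Matrix (Fin 4) (Fin 4) F) = U0mat F α β l μ) ∧
      Nat.card H = q ^ 4 ∧
      (∀ g : GL (Fin 4) F, g ∈ ⁅H, H⁆ ↔
        ∃ β μ : F, (g : Matrix (Fin 4) (Fin 4) F) = U0mat F 0 β 0 μ) ∧
      (∀ g : GL (Fin 4) F,
        (g ∈ H ∧ ∀ h ∈ H, g * h = h * g) ↔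
        ∃ μ : F, (g : Matrix (Fin 4) (Fin 4) F) = U0mat F 0 0 0 μ) := by
  obtain ⟨p, n, -, hp, -, rfl⟩ := hq
  have h2 : IsUnit (2 : F) :=
    isUnit_two_of_odd_of_natCast_eq_zero hp.pow (hF ▸ Nat.cast_card_eq_zero F)
  obtain ⟨H, hmem, hcard, hcomm, hcenter⟩ := U0_subgroup_commutator_center_general h2
  exact ⟨H, hmem, by simp [Nat.card, hcard, hF], hcomm, hcenter⟩
end
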